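/- arXiv:2003.07810 — 4 statements merged into one kernel-verified Lean document; each statement's English description precedes it below -/
import Mathlib

section
/- Let v_1, …, v_m ∈ ℝ^n and x ∈ [0,1]^m. Suppose Σ_{i=1}^m x_i v_i v_iᵀ = I_n and ‖v_i‖ ≤ ε ≤ 1 for all i ∈ [m]. Then there exists a subset S ⊆ [m] satisfying (1 − 8ε)·I_n ⪯ Σ_{i ∈ S} v_i v_iᵀ ⪯ (1 + 8ε)·I_n. -/
/-!
The proof is a two-sided version of the method of interlacing polynomials (in the spirit of
Marcus–Spielman–Srivastava and Kyng–Luh–Song). Select each `i` independently with probability `xᵢ`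
and put `A = ∑ (ξᵢ - xᵢ) vᵢ vᵢᵀ`. The largest zero in `z` of the product
`det (z + A) · det (z - A)` is the spectral norm of `A`, so it suffices to find an outcome for which
this product has no zero in `[8ε, ∞)`.

Introduce one variable `xᵢ` per vector and let `pair v A` be the product of
`det (z ± A + ∑ xᵢ vᵢ vᵢᵀ)`. The expectation over one Bernoulli variable is computed exactly by the
operator `T i τ = 1 - (τ/2) ∂ᵢ²` with `τ` its variance (`pair_mix`), because the determinants are
affine in each `xᵢ`. These operators preserve stability (`Stable.T`), so every partial expectation
is real-rooted after setting `x = 0`, and so is every convex combination of the two conditional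
expectations at a given step. Hence, by `interlacing`, one of the two conditional choices keeps
`[8ε, ∞)` free of zeros, and iterating gives the subset (`exists_rounding`).

It remains to see that the full expectation has no zeros in `[8ε, ∞)`. This is a barrier argument.
Say that `p` has barrier `φ` above `w` if `p > 0` and `∂ⱼp ≤ φ p` on the orthant `x ≥ w`. For
stable `p` of degree two in each variable, `T i τ p` has the same barrier above the orthant moved by
`τ φ` in direction `i` (`barrier_step`); along a coordinate line this is a statement about two
quadratics, whose Wronskian has a sign by the Rayleigh inequality (`quad_barrier`,
`Stable.rayleigh`). For fixed `z ≥ 8ε`, `pair v 0` has barrier `2ε` above the point with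
coordinates `-2ε τᵢ`, `τᵢ = xᵢ(1 - xᵢ)` (`barrier_init`), and the moves bring this point exactly
to `0`.
-/

open Matrix BigOperators

namespace SpectralRounding

open MvPolynomial

/-! ### Stable polynomials -/

/-- The restriction `t ↦ p (pt + t d)` of a real multivariate polynomial to a line, as a univariate
polynomial over an extension field `𝕜` of `ℝ` (below, `ℝ` or `ℂ`). -/
noncomputable def line {σ 𝕜 : Type*} [Field 𝕜] [Algebra ℝ 𝕜] (pt d : σ → 𝕜) :
    MvPolynomial σ ℝ →ₐ[ℝ] Polynomial 𝕜 :=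
  aeval fun k => Polynomial.C (pt k) + Polynomial.C (d k) * Polynomial.X

lemma eval_line {σ 𝕜 : Type*} [Field 𝕜] [Algebra ℝ 𝕜] (pt d : σ → 𝕜) (p : MvPolynomial σ ℝ)
    (t : 𝕜) : (line pt d p).eval t = aeval (fun k => pt k + d k * t) p := by
  induction p using MvPolynomial.induction_on with
  | C a => simp [line, Polynomial.algebraMap_eq, IsScalarTower.algebraMap_apply ℝ 𝕜 (Polynomial 𝕜)]
  | add p q hp hq => simp [hp, hq]
  | mul_X p k hp =>
    rw [map_mul, map_mul, Polynomial.eval_mul, hp]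
    simp [line]

lemma derivative_line {σ 𝕜 : Type*} [Fintype σ] [Field 𝕜] [Algebra ℝ 𝕜] (pt d : σ → 𝕜)
    (p : MvPolynomial σ ℝ) :
    Polynomial.derivative (line pt d p) =
      ∑ k, Polynomial.C (d k) * line pt d (pderiv k p) := by
  classical
  induction p using MvPolynomial.induction_on with
  | C a => simp [line, IsScalarTower.algebraMap_apply ℝ 𝕜 (Polynomial 𝕜)]
  | add p q hp hq => simp [hp, hq, mul_add, Finset.sum_add_distrib]
  | mul_X p k hp =>
    have h1 : line pt d (X k) = Polynomial.C (pt k) + Polynomial.C (d k) * Polynomial.X := by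
      simp [line]
    have h2 : ∀ j, Polynomial.C (d j) * line pt d (pderiv j (p * X k)) =
        Polynomial.C (d j) * line pt d (pderiv j p) * line pt d (X k)
          + (if j = k then Polynomial.C (d k) * line pt d p else 0) := by
      intro j
      rw [pderiv_mul, pderiv_X]
      by_cases hjk : j = k
      · subst hjk; simp; ring
      · simp [hjk, Ne.symm hjk]; ring
    rw [map_mul, Polynomial.derivative_mul, hp, Finset.sum_congr rfl (fun j _ => h2 j),
      Finset.sum_add_distrib, ← Finset.sum_mul, h1]
    simp
    ring

lemma derivative_line_single {σ 𝕜 : Type*} [Fintype σ] [DecidableEq σ] [Field 𝕜] [Algebra ℝ 𝕜]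
    (pt : σ → 𝕜) (i : σ) (p : MvPolynomial σ ℝ) :
    Polynomial.derivative (line pt (Pi.single i 1) p) = line pt (Pi.single i 1) (pderiv i p) := by
  rw [derivative_line, Finset.sum_eq_single i] <;> simp +contextual

/-- Stability of a polynomial in the variables `z = X none` and `xᵢ = X (some i)`: it has no zero with
`Im z > 0` and `Im xᵢ ≥ 0` for all `i`. The asymmetry between `z` and the `xᵢ` makes the set of
admissible points closed under setting `x = 0`, so that no limiting argument is needed there. -/
def Stable {m : ℕ} (p : MvPolynomial (Option (Fin m)) ℝ) : Prop :=
  ∀ pt : Option (Fin m) → ℂ, 0 < (pt none).im → (∀ i, 0 ≤ (pt (some i)).im) → aeval pt p ≠ 0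

lemma Stable.mul {m : ℕ} {p q : MvPolynomial (Option (Fin m)) ℝ} (hp : Stable p) (hq : Stable q) :
    Stable (p * q) := by
  intro pt h0 h1
  rw [map_mul]
  exact mul_ne_zero (hp pt h0 h1) (hq pt h0 h1)

lemma inv_im_neg {w : ℂ} (h : 0 < w.im) : (1 / w).im < 0 := by
  have : w ≠ 0 := by rintro rfl; simp at h
  rw [one_div, Complex.inv_im]
  exact div_neg_of_neg_of_pos (by linarith) (Complex.normSq_pos.2 this)

/-- If all roots lie in the open lower half plane then `P'/P = ∑ 1/(· - r)` has negative imaginary part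
at `0`, unless `P` is constant. -/
lemma logDeriv_aux {P : Polynomial ℂ} (h0 : P.eval 0 ≠ 0) (h : ∀ r ∈ P.roots, r.im < 0) :
    (P.derivative.eval 0 / P.eval 0).im ≤ 0 ∧
      ((P.derivative.eval 0 / P.eval 0).im = 0 → P.derivative.eval 0 = 0) := by
  rw [(IsAlgClosed.splits P).eval_derivative_div_eval_of_ne_zero h0]
  have key : ∀ s : Multiset ℂ, (∀ r ∈ s, r.im < 0) →
      ((s.map fun z => 1 / (0 - z)).sum).im ≤ 0 ∧
      (((s.map fun z => 1 / (0 - z)).sum).im = 0 → s = 0) := by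
    intro s
    induction s using Multiset.induction_on with
    | empty => simp
    | cons a s ih =>
      intro hs
      have h1 := ih (fun r hr => hs r (Multiset.mem_cons_of_mem hr))
      have h2 : (1 / (0 - a)).im < 0 := inv_im_neg (by
        have := hs a (Multiset.mem_cons_self a s); simpa using this)
      rw [Multiset.map_cons, Multiset.sum_cons, Complex.add_im]
      refine ⟨by linarith [h1.1], fun h => ?_⟩
      linarith [h1.1]
  refine ⟨(key _ h).1, fun h' => ?_⟩
  have hr := (key _ h).2 h'
  have hd : P.natDegree = 0 := by
    rw [(IsAlgClosed.splits P).natDegree_eq_card_roots, hr]; rfl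
  rw [Polynomial.derivative_of_natDegree_zero hd]; simp

/-- The logarithmic derivative `∂ᵢp / p` of a stable polynomial maps the stability region to the
closed lower half plane, and is real only where it vanishes. -/
lemma Stable.logDeriv {m : ℕ} {p : MvPolynomial (Option (Fin m)) ℝ} (hp : Stable p)
    (pt : Option (Fin m) → ℂ) (h0 : 0 < (pt none).im) (h1 : ∀ i, 0 ≤ (pt (some i)).im)
    (i : Fin m) :
    (aeval pt (pderiv (some i) p) / aeval pt p).im ≤ 0 ∧
      ((aeval pt (pderiv (some i) p) / aeval pt p).im = 0 →
        aeval pt (pderiv (some i) p) = 0) := by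
  have e : ∀ q : MvPolynomial (Option (Fin m)) ℝ,
      (line pt (Pi.single (some i) 1) q).eval 0 = aeval pt q := by
    intro q; rw [eval_line]; simp
  have := logDeriv_aux (P := line pt (Pi.single (some i) 1) p) (by rw [e]; exact hp pt h0 h1) ?_
  · rwa [derivative_line_single, e, e] at this
  · intro r hr
    by_contra hneg
    push Not at hneg
    have := (Polynomial.mem_roots'.1 hr).2
    rw [Polynomial.IsRoot, eval_line] at this
    refine hp _ ?_ ?_ this
    · simpa using h0
    · intro j
      by_cases hj : j = i
      · subst hj; simpa using add_nonneg (h1 j) hneg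
      · simpa [Pi.single_apply, hj] using h1 j

/-- `1 + s ∂ᵢ` preserves stability: a zero of `p + s ∂ᵢp` would make `∂ᵢp / p` a nonzero real number. -/
lemma Stable.add_smul_pderiv {m : ℕ} {p : MvPolynomial (Option (Fin m)) ℝ} (hp : Stable p)
    (s : ℝ) (i : Fin m) : Stable (p + s • pderiv (some i) p) := by
  intro pt h0 h1 h
  have hne := hp pt h0 h1
  obtain ⟨-, h2⟩ := hp.logDeriv pt h0 h1 i
  rw [map_add, map_smul, Complex.real_smul] at h
  have hs : (s : ℂ) ≠ 0 := by
    rintro hs; rw [hs] at h; simp at h; exact hne h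
  have h3 : aeval pt (pderiv (some i) p) / aeval pt p = ((-1 / s : ℝ) : ℂ) := by
    push_cast
    field_simp
    linear_combination h
  have h4 := h2 (by rw [h3, Complex.ofReal_im])
  rw [h4] at h
  simp at h
  exact hne h

/-- The operator `1 - (τ/2) ∂ᵢ²` in the variable `xᵢ = X (some i)`. -/
noncomputable def T {m : ℕ} (i : Fin m) (τ : ℝ) :
    MvPolynomial (Option (Fin m)) ℝ →ₗ[ℝ] MvPolynomial (Option (Fin m)) ℝ :=
  LinearMap.id - (τ / 2) • ((pderiv (some i)).toLinearMap ∘ₗ (pderiv (some i)).toLinearMap)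

lemma T_apply {m : ℕ} (i : Fin m) (τ : ℝ) (p : MvPolynomial (Option (Fin m)) ℝ) :
    T i τ p = p - (τ / 2) • pderiv (some i) (pderiv (some i) p) := rfl

/-- `1 - c ∂ᵢ²` preserves stability for `c ≥ 0`, since it factors as `(1 - √c ∂ᵢ)(1 + √c ∂ᵢ)`. -/
lemma Stable.T {m : ℕ} {p : MvPolynomial (Option (Fin m)) ℝ} (hp : Stable p)
    (i : Fin m) {τ : ℝ} (hτ : 0 ≤ τ) : Stable (T i τ p) := by
  have := (hp.add_smul_pderiv (Real.sqrt (τ / 2)) i).add_smul_pderiv (-Real.sqrt (τ / 2)) i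
  convert this using 1
  rw [T_apply, map_add, Derivation.map_smul, smul_add, smul_smul, neg_mul,
    Real.mul_self_sqrt (by positivity)]
  module

lemma pderiv_comm {σ : Type*} (i j : σ) (p : MvPolynomial σ ℝ) :
    pderiv i (pderiv j p) = pderiv j (pderiv i p) := by
  classical
  have : ⁅(pderiv i : Derivation ℝ (MvPolynomial σ ℝ) (MvPolynomial σ ℝ)),
      (pderiv j : Derivation ℝ (MvPolynomial σ ℝ) (MvPolynomial σ ℝ))⁆ = 0 := by
    apply MvPolynomial.derivation_ext
    intro k
    simp only [Derivation.commutator_apply, pderiv_X, Pi.single_apply]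
    split_ifs <;> simp
  have h := congrArg (fun D => D p) this
  simpa [Derivation.commutator_apply, sub_eq_zero] using h

lemma pderiv_T {m : ℕ} (k : Option (Fin m)) (i : Fin m) (τ : ℝ)
    (p : MvPolynomial (Option (Fin m)) ℝ) : pderiv k (T i τ p) = T i τ (pderiv k p) := by
  rw [T_apply, T_apply, map_sub, Derivation.map_smul, pderiv_comm k, pderiv_comm k]

lemma aeval_ofReal {σ : Type*} (y : σ → ℝ) (p : MvPolynomial σ ℝ) :
    aeval (fun k => (y k : ℂ)) p = ((eval y p : ℝ) : ℂ) := by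
  induction p using MvPolynomial.induction_on with
  | C a => simp
  | add p q hp hq => simp [hp, hq]
  | mul_X p k hp => simp [hp]

lemma deriv_nonpos_aux {h : ℝ → ℝ} {a : ℝ} (hd : HasDerivAt h a 0) (h0 : h 0 = 0)
    (hneg : ∀ t, 0 < t → h t ≤ 0) : a ≤ 0 := by
  have h1 := hd.hasDerivWithinAt (s := Set.Ioi 0)
  rw [hasDerivWithinAt_iff_tendsto_slope' (by simp)] at h1
  refine le_of_tendsto h1 ?_
  filter_upwards [self_mem_nhdsWithin] with t ht
  rw [slope_def_field, h0]
  exact div_nonpos_of_nonpos_of_nonneg (by linarith [hneg t ht]) (by simpa using le_of_lt ht)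

/-- The Rayleigh (negative dependence) inequality `p ∂ᵢ∂ⱼp ≤ ∂ᵢp ∂ⱼp` at real points. The function
`t ↦ Im (∂ᵢp · conj p)` along `y + i t d` vanishes at `t = 0` and is nonpositive for `t > 0`, so its
derivative at `0` is nonpositive; the direction `d` is `eⱼ` plus a multiple `θ → 0` of the
`z`-direction, which keeps the line inside the stability region. -/
lemma Stable.rayleigh {m : ℕ} {p : MvPolynomial (Option (Fin m)) ℝ} (hp : Stable p)
    (y : Option (Fin m) → ℝ) (i j : Fin m) :
    eval y (pderiv (some j) (pderiv (some i) p)) * eval y p ≤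
      eval y (pderiv (some i) p) * eval y (pderiv (some j) p) := by
  have key : ∀ θ : ℝ, 0 < θ →
      (eval y (pderiv (some j) (pderiv (some i) p)) * eval y p -
      eval y (pderiv (some i) p) * eval y (pderiv (some j) p)) +
      θ * (eval y (pderiv none (pderiv (some i) p)) * eval y p -
      eval y (pderiv (some i) p) * eval y (pderiv none p)) ≤ 0 := by
    intro θ hθ
    set d : Option (Fin m) → ℂ := Pi.single none (θ : ℂ) + Pi.single (some j) 1 with hd
    set yc : Option (Fin m) → ℂ := fun k => (y k : ℂ) with hyc
    have e0 : ∀ q : MvPolynomial (Option (Fin m)) ℝ,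
        (line yc d q).eval 0 = ((eval y q : ℝ) : ℂ) := by
      intro q; rw [eval_line, ← aeval_ofReal]; simp [hyc]
    have e1 : ∀ q : MvPolynomial (Option (Fin m)) ℝ,
        (Polynomial.derivative (line yc d q)).eval 0 =
          ((θ * eval y (pderiv none q) + eval y (pderiv (some j) q) : ℝ) : ℂ) := by
      intro q
      rw [derivative_line, Polynomial.eval_finsetSum]
      simp only [Polynomial.eval_mul, Polynomial.eval_C, e0, Fintype.sum_option]
      simp [hd, Pi.single_apply]
    have hD : ∀ q : MvPolynomial (Option (Fin m)) ℝ,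
        HasDerivAt (fun t : ℝ => (line yc d q).eval ((t : ℂ) * Complex.I))
          (((θ * eval y (pderiv none q) + eval y (pderiv (some j) q) : ℝ) : ℂ) * Complex.I) 0 := by
      intro q
      have h1 := (line yc d q).hasDerivAt ((((0 : ℝ) : ℂ)) * Complex.I)
      have h2 : HasDerivAt (fun t : ℝ => (t : ℂ) * Complex.I) (1 * Complex.I) 0 :=
        (Complex.ofRealCLM.hasDerivAt (x := (0 : ℝ))).mul_const Complex.I
      have h3 := h1.comp (0 : ℝ) h2
      have h4 := e1 q
      simp only [Complex.ofReal_zero, zero_mul, one_mul] at h3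
      rw [h4] at h3
      exact h3
    have hN := hD (pderiv (some i) p)
    have hP := hD p
    have hmul := hN.mul hP.star
    have him := Complex.imCLM.hasFDerivAt.comp_hasDerivAt (0 : ℝ) hmul
    refine le_trans (le_of_eq ?_) (deriv_nonpos_aux him ?_ ?_)
    · simp [e0]
      ring
    · simp [e0]
    · intro t ht
      have hpt : ∀ q : MvPolynomial (Option (Fin m)) ℝ, (line yc d q).eval ((t : ℂ) * Complex.I) =
          aeval (fun k => yc k + d k * ((t : ℂ) * Complex.I)) q := fun q => eval_line _ _ _ _
      have hz : 0 < ((fun k => yc k + d k * ((t : ℂ) * Complex.I)) none).im := by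
        simp [hd, hyc]; positivity
      have hxs : ∀ k, 0 ≤ ((fun k => yc k + d k * ((t : ℂ) * Complex.I)) (some k)).im := by
        intro k
        by_cases hk : k = j
        · subst hk; simp [hd, hyc]; positivity
        · simp [hd, hyc, hk]
      have h1 := (hp.logDeriv (fun k => yc k + d k * ((t : ℂ) * Complex.I)) hz hxs i).1
      have h2 := hp (fun k => yc k + d k * ((t : ℂ) * Complex.I)) hz hxs
      simp only [Function.comp_apply, Complex.imCLM_apply, Pi.mul_apply, hpt]
      set α := aeval (fun k => yc k + d k * ((t : ℂ) * Complex.I)) (pderiv (some i) p)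
      set β := aeval (fun k => yc k + d k * ((t : ℂ) * Complex.I)) p
      have h3 : α * star β = (α / β) * (Complex.normSq β : ℂ) := by
        rw [Complex.normSq_eq_conj_mul_self]
        field_simp
        rfl
      show (α * star β).im ≤ 0
      rw [h3, Complex.im_mul_ofReal]
      exact mul_nonpos_of_nonpos_of_nonneg h1 (Complex.normSq_nonneg _)
  set u := (eval y (pderiv (some j) (pderiv (some i) p)) * eval y p -
      eval y (pderiv (some i) p) * eval y (pderiv (some j) p))
  set w := (eval y (pderiv none (pderiv (some i) p)) * eval y p -
      eval y (pderiv (some i) p) * eval y (pderiv none p))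
  suffices u ≤ 0 by simp only [u] at this; linarith
  by_contra hu
  push Not at hu
  -- A value of `θ` with `θ |w| < u / 2`, contradicting `u + θ w ≤ 0`.
  have h1 := key (u / (2 * (|w| + 1))) (by positivity)
  have h2 : u / (2 * (|w| + 1)) * w ≥ - (u / 2) := by
    have h4 : -(|w| + 1) ≤ w := by linarith [neg_abs_le w]
    have h5 : 0 < u / (2 * (|w| + 1)) := by positivity
    have h6 := mul_le_mul_of_nonneg_left h4 h5.le
    have h7 : u / (2 * (|w| + 1)) * (-(|w| + 1)) = -(u / 2) := by field_simp
    linarith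
  linarith

/-! ### Barrier estimates for quadratics -/

lemma eval_of_derivative_three {R : Polynomial ℝ}
    (h : Polynomial.derivative (Polynomial.derivative (Polynomial.derivative R)) = 0) (t : ℝ) :
    R.eval t = R.eval 0 + R.derivative.eval 0 * t + R.derivative.derivative.eval 0 / 2 * t ^ 2 := by
  have hdeg : R.natDegree < 3 := by
    rw [Nat.lt_succ_iff, Polynomial.natDegree_le_iff_coeff_eq_zero]
    intro N hN
    obtain ⟨k, rfl⟩ : ∃ k, N = k + 3 := ⟨N - 3, by omega⟩
    have := congrArg (fun q => Polynomial.coeff q k) h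
    simp only [Polynomial.coeff_derivative, Polynomial.coeff_zero] at this
    have h1 : ((k : ℝ) + 1) ≠ 0 := by positivity
    have h2 : (((k + 1 : ℕ) : ℝ) + 1) ≠ 0 := by positivity
    have h3 : (((k + 1 + 1 : ℕ) : ℝ) + 1) ≠ 0 := by positivity
    rw [mul_eq_zero, or_iff_left h1, mul_eq_zero, or_iff_left h2, mul_eq_zero, or_iff_left h3] at this
    exact this
  rw [Polynomial.eval_eq_sum_range' hdeg]
  simp only [← Polynomial.coeff_zero_eq_eval_zero, Polynomial.coeff_derivative,
    Finset.sum_range_succ, Finset.sum_range_zero]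
  push_cast
  ring

/-- Taylor expansion in one variable of a polynomial that is quadratic in it. -/
lemma eval_add_single {m : ℕ} {q : MvPolynomial (Option (Fin m)) ℝ} {i : Option (Fin m)}
    (h : pderiv i (pderiv i (pderiv i q)) = 0) (y : Option (Fin m) → ℝ) (t : ℝ) :
    eval (y + Pi.single i t) q =
      eval y q + eval y (pderiv i q) * t + eval y (pderiv i (pderiv i q)) / 2 * t ^ 2 := by
  have e0 : ∀ (r : MvPolynomial (Option (Fin m)) ℝ) (u : ℝ),
      (line y (Pi.single i 1) r).eval u = eval (y + Pi.single i u) r := by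
    intro r u
    rw [eval_line, ← MvPolynomial.coe_aeval_eq_eval]
    show _ = aeval _ r
    congr 2
    funext k
    by_cases hk : k = i
    · subst hk; simp
    · simp [hk]
  have := eval_of_derivative_three (R := line y (Pi.single i 1) q)
    (by simp only [derivative_line_single, h, map_zero]) t
  simpa only [derivative_line_single, e0, Pi.single_zero, add_zero] using this

/-- A real-rooted quadratic that is positive on `[0, ∞)` has nonnegative coefficients. -/
lemma quad_facts {A B C : ℝ} (hA : 0 < A) (hpos : ∀ u, 0 ≤ u → 0 < A + B * u + C * u ^ 2)
    (hdisc : 4 * (A * C) ≤ B ^ 2) : 0 ≤ B ∧ 0 ≤ C := by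
  have hC : 0 ≤ C := by
    by_contra hC
    push Not at hC
    have h1 : C ≠ 0 := hC.ne
    have hd : 0 ≤ (|B| + A) / (-C) := div_nonneg (by positivity) (by linarith)
    have h := hpos ((|B| + A) / (-C) + 1) (by linarith)
    set u := (|B| + A) / (-C) + 1 with hu
    have h3 : C * u = -(|B| + A) + C := by
      rw [hu, mul_add, div_neg, mul_neg, mul_div_cancel₀ _ h1]; ring
    have h4 : C * u ^ 2 = u * (-(|B| + A) + C) := by rw [← h3]; ring
    rw [h4] at h
    nlinarith [le_abs_self B]
  refine ⟨?_, hC⟩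
  by_contra hB
  push Not at hB
  rcases hC.eq_or_lt with hC | hC
  · subst hC
    have := hpos (A / (-B)) (div_nonneg hA.le (by linarith))
    have h2 : B * (A / (-B)) = -A := by rw [div_neg, mul_neg, mul_div_cancel₀ _ hB.ne]
    rw [h2] at this
    linarith
  · have := hpos (-B / (2 * C)) (div_nonneg (by linarith) (by linarith))
    have h2 : A + B * (-B / (2 * C)) + C * (-B / (2 * C)) ^ 2 = (4 * (A * C) - B ^ 2) / (4 * C) := by
      field_simp; ring
    rw [h2] at this
    have := div_nonpos_of_nonpos_of_nonneg (sub_nonpos.2 hdisc) (show 0 ≤ 4 * C by linarith)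
    linarith

/-- Positivity after applying `1 - (τ/2) ∂²` to the quadratic `A + B u + C u²` and shifting by `δ`. -/
lemma quad_pos {A B C ψ δ τ : ℝ} (hA : 0 < A) (hpos : ∀ u, 0 ≤ u → 0 < A + B * u + C * u ^ 2)
    (hdisc : 4 * (A * C) ≤ B ^ 2) (hψ : B ≤ ψ * A) (hτ : 0 ≤ τ) (hδ : τ * ψ ≤ δ) (hδ0 : 0 ≤ δ) :
    0 < A + B * δ + C * δ ^ 2 - τ * C := by
  obtain ⟨hB, hC⟩ := quad_facts hA hpos hdisc
  -- `C ≤ B² / (4A) ≤ ψ B / 4`, so `τ C ≤ δ B / 4`.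
  have h1 : 4 * C ≤ ψ * B := by
    have : A * (4 * C) ≤ A * (ψ * B) := by nlinarith
    exact le_of_mul_le_mul_left this hA
  have h2 : τ * (4 * C) ≤ τ * (ψ * B) := mul_le_mul_of_nonneg_left h1 hτ
  have h3 : τ * ψ * B ≤ δ * B := mul_le_mul_of_nonneg_right hδ hB
  have h4 : 0 ≤ C * δ ^ 2 := by positivity
  have h5 : 0 ≤ B * δ := by positivity
  nlinarith

/-- Let `P = A + B u + C u²` be real-rooted and positive on `[0, ∞)` with `P'/P ≤ ψ` at `0`, and let
`Q = a + b u + c u²` be nonnegative on `[0, ∞)` with `Q P' ≤ Q' P` everywhere. Then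
`(1 - (τ/2) ∂²) Q` is nonnegative at `δ ≥ τ ψ`. It is applied with `Q = φ p - ∂ⱼp`, for which
the Wronskian hypothesis is the Rayleigh inequality. -/
lemma quad_barrier {A B C a b c ψ δ τ : ℝ} (hA : 0 < A)
    (hpos : ∀ u, 0 ≤ u → 0 < A + B * u + C * u ^ 2)
    (hdisc : 4 * (A * C) ≤ B ^ 2) (hψ : B ≤ ψ * A) (hτ : 0 ≤ τ) (hδ : τ * ψ ≤ δ) (hδ0 : 0 ≤ δ)
    (hQ : ∀ u, 0 ≤ u → 0 ≤ a + b * u + c * u ^ 2)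
    (hW : ∀ u, (a + b * u + c * u ^ 2) * (B + 2 * C * u) ≤
      (b + 2 * c * u) * (A + B * u + C * u ^ 2)) :
    0 ≤ a + b * δ + c * δ ^ 2 - τ * c := by
  obtain ⟨hB, hC⟩ := quad_facts hA hpos hdisc
  have ha : 0 ≤ a := by simpa using hQ 0 le_rfl
  rcases le_or_gt c 0 with hc | hc
  · have := hQ δ hδ0
    nlinarith
  rcases hB.eq_or_lt with hB | hB
  · subst hB
    have hC0 : C = 0 := by nlinarith
    subst hC0
    -- Here `P` is constant, so `Q` is nondecreasing on all of `ℝ`, which contradicts `c > 0`.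
    have := hW (-(b + 1) / (2 * c))
    have h2 : 2 * c * (-(b + 1) / (2 * c)) = -(b + 1) := by field_simp
    rw [h2] at this
    nlinarith
  -- Evaluating the Wronskian inequality at `u = -A / B` leads to `c A ≤ b B`.
  have h1 := hW (-A / B)
  have h2 : (b + 2 * c * (-A / B)) * (A + B * (-A / B) + C * (-A / B) ^ 2) -
      (a + b * (-A / B) + c * (-A / B) ^ 2) * (B + 2 * C * (-A / B)) =
      (A / B ^ 2) * (b * B * (1 - A * C / B ^ 2) * B - c * A * B) -
        a * (B ^ 2 - 2 * (A * C)) / B := by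
    field_simp; ring
  have h3 : 0 ≤ a * (B ^ 2 - 2 * (A * C)) / B := by
    apply div_nonneg _ hB.le
    apply mul_nonneg ha
    nlinarith [mul_nonneg hA.le hC]
  have h4 : 0 ≤ (A / B ^ 2) * (b * B * (1 - A * C / B ^ 2) * B - c * A * B) := by linarith
  have h5 : 0 ≤ b * B * (1 - A * C / B ^ 2) * B - c * A * B :=
    nonneg_of_mul_nonneg_right h4 (by positivity)
  have h6 : c * A ≤ b * B * (1 - A * C / B ^ 2) := by
    have : 0 ≤ (b * B * (1 - A * C / B ^ 2) - c * A) * B := by linarith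
    have := nonneg_of_mul_nonneg_left this hB
    linarith
  have h7 : A * C / B ^ 2 ≤ 1 / 4 := by
    rw [div_le_iff₀ (by positivity)]; linarith
  have h8 : 0 ≤ A * C / B ^ 2 := by positivity
  have hcA : 0 < c * A := by positivity
  have hbB : 0 < b * B := by
    by_contra hneg
    push Not at hneg
    nlinarith
  have h9 : c * A ≤ b * B := by nlinarith
  have hb : 0 < b := pos_of_mul_pos_left hbB hB.le
  have h10 : c ≤ b * ψ := by
    have : c * A ≤ (b * ψ) * A := by nlinarith [mul_le_mul_of_nonneg_left hψ hb.le]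
    exact le_of_mul_le_mul_right this hA
  have h11 : τ * c ≤ τ * (b * ψ) := mul_le_mul_of_nonneg_left h10 hτ
  have h12 : τ * ψ * b ≤ δ * b := mul_le_mul_of_nonneg_right hδ hb.le
  have h13 : 0 ≤ c * δ ^ 2 := by positivity
  nlinarith

/-! ### The multivariate barrier argument -/

/-- The points with first coordinate `z` whose remaining coordinates dominate `w`. -/
def Above {m : ℕ} (z : ℝ) (w : Fin m → ℝ) (y : Option (Fin m) → ℝ) : Prop :=
  y none = z ∧ ∀ i, w i ≤ y (some i)

/-- On the whole orthant above `w` (with the first variable fixed to `z`), `p` is positive and all its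
logarithmic derivatives `∂ⱼp / p` are at most `φ`. -/
def Barrier {m : ℕ} (z : ℝ) (w : Fin m → ℝ) (φ : ℝ) (p : MvPolynomial (Option (Fin m)) ℝ) : Prop :=
  ∀ y, Above z w y → 0 < eval y p ∧ ∀ j, eval y (pderiv (some j) p) ≤ φ * eval y p

/-- The polynomial has degree at most two in each variable `xᵢ`. -/
def DegTwo {m : ℕ} (p : MvPolynomial (Option (Fin m)) ℝ) : Prop :=
  ∀ i : Fin m, pderiv (some i) (pderiv (some i) (pderiv (some i) p)) = 0

lemma DegTwo.T {m : ℕ} {p : MvPolynomial (Option (Fin m)) ℝ} (h : DegTwo p) (i : Fin m) (τ : ℝ) :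
    DegTwo (T i τ p) := by
  intro k
  rw [pderiv_T, pderiv_T, pderiv_T, h k, map_zero]

/-- Applying `1 - (τ/2) ∂ᵢ²` preserves the barrier bound `φ`, provided the orthant is moved by
`δ ≥ τ φ` in the direction `i`. -/
lemma barrier_step {m : ℕ} {p : MvPolynomial (Option (Fin m)) ℝ} (hp : Stable p)
    (hdeg : DegTwo p) {z φ : ℝ} {w : Fin m → ℝ} (hb : Barrier z w φ p) (i : Fin m)
    {τ δ : ℝ} (hτ : 0 ≤ τ) (hδ : τ * φ ≤ δ) (hδ0 : 0 ≤ δ) :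
    Barrier z (w + Pi.single i δ) φ (T i τ p) := by
  intro y hy
  set y₀ : Option (Fin m) → ℝ := y + Pi.single (some i) (-δ) with hy₀
  have hyy : y = y₀ + Pi.single (some i) δ := by
    rw [hy₀, add_assoc, ← Pi.single_add]; simp
  have habove : ∀ u, 0 ≤ u → Above z w (y₀ + Pi.single (some i) u) := by
    intro u hu
    refine ⟨by simpa [hy₀] using hy.1, fun k => ?_⟩
    have := hy.2 k
    by_cases hk : k = i
    · subst hk; simp [hy₀] at this ⊢; linarith
    · simpa [hy₀, hk] using this
  have h3 : pderiv (some i) (pderiv (some i) (pderiv (some i) p)) = 0 := hdeg i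
  have e0 := fun u => eval_add_single h3 y₀ u
  have e1 : ∀ u, eval (y₀ + Pi.single (some i) u) (pderiv (some i) p) =
      eval y₀ (pderiv (some i) p) + eval y₀ (pderiv (some i) (pderiv (some i) p)) * u := by
    intro u
    rw [eval_add_single (by rw [h3, map_zero]), h3, map_zero]; ring
  have e2 : ∀ u, eval (y₀ + Pi.single (some i) u) (pderiv (some i) (pderiv (some i) p)) =
      eval y₀ (pderiv (some i) (pderiv (some i) p)) := by
    intro u
    rw [eval_add_single (by rw [h3, map_zero, map_zero]), h3, map_zero, map_zero, map_zero]; ring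
  have hb0 := hb y₀ (by simpa using habove 0 le_rfl)
  have hpos : ∀ u, 0 ≤ u → 0 < eval y₀ p + eval y₀ (pderiv (some i) p) * u +
      eval y₀ (pderiv (some i) (pderiv (some i) p)) / 2 * u ^ 2 := by
    intro u hu
    rw [← e0]; exact (hb _ (habove u hu)).1
  have hdisc : 4 * (eval y₀ p * (eval y₀ (pderiv (some i) (pderiv (some i) p)) / 2)) ≤
      eval y₀ (pderiv (some i) p) ^ 2 := by
    set A := eval y₀ p
    set B := eval y₀ (pderiv (some i) p)
    set C := eval y₀ (pderiv (some i) (pderiv (some i) p))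
    -- The Rayleigh inequality at the critical point `-B / C` of the quadratic is its discriminant bound.
    by_cases hC : C = 0
    · rw [hC]; simp; positivity
    · have := hp.rayleigh (y₀ + Pi.single (some i) (-B / C)) i i
      rw [e0, e1, e2] at this
      have h5 : B + C * (-B / C) = 0 := by field_simp; ring
      rw [h5] at this
      have h6 : C * (A + B * (-B / C) + C / 2 * (-B / C) ^ 2) = C * A - B ^ 2 / 2 := by
        field_simp; ring
      rw [h6] at this
      linarith
  constructor
  · have := quad_pos hb0.1 hpos hdisc (hb0.2 i) hτ hδ hδ0
    rw [T_apply, map_sub, smul_eval, hyy, e0, e2]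
    linarith
  · intro j
    have h3j : pderiv (some i) (pderiv (some i) (pderiv (some i) (pderiv (some j) p))) = 0 := by
      rw [pderiv_comm (some i) (some j) p, pderiv_comm (some i) (some j), pderiv_comm (some i) (some j), h3,
        map_zero]
    have f0 := fun u => eval_add_single h3j y₀ u
    have f1 : ∀ u, eval (y₀ + Pi.single (some i) u) (pderiv (some i) (pderiv (some j) p)) =
        eval y₀ (pderiv (some i) (pderiv (some j) p)) +
          eval y₀ (pderiv (some i) (pderiv (some i) (pderiv (some j) p))) * u := by
      intro u
      rw [eval_add_single (by rw [h3j, map_zero]), h3j, map_zero]; ring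
    have f2 : ∀ u, eval (y₀ + Pi.single (some i) u)
          (pderiv (some i) (pderiv (some i) (pderiv (some j) p))) =
        eval y₀ (pderiv (some i) (pderiv (some i) (pderiv (some j) p))) := by
      intro u
      rw [eval_add_single (by rw [h3j, map_zero, map_zero]), h3j, map_zero, map_zero, map_zero]; ring
    have := quad_barrier (a := φ * eval y₀ p - eval y₀ (pderiv (some j) p))
      (b := φ * eval y₀ (pderiv (some i) p) - eval y₀ (pderiv (some i) (pderiv (some j) p)))
      (c := (φ * eval y₀ (pderiv (some i) (pderiv (some i) p)) -
        eval y₀ (pderiv (some i) (pderiv (some i) (pderiv (some j) p)))) / 2)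
      hb0.1 hpos hdisc (hb0.2 i) hτ hδ hδ0 ?_ ?_
    · rw [pderiv_T, T_apply, T_apply, map_sub, smul_eval, map_sub, smul_eval, hyy, e0, e2, f0, f2]
      linarith
    · intro u hu
      have := (hb _ (habove u hu)).2 j
      rw [e0, f0] at this
      linarith
    · intro u
      have := hp.rayleigh (y₀ + Pi.single (some i) u) i j
      rw [pderiv_comm (some j) (some i), e0, f0, e1, f1] at this
      linarith

/-! ### The determinantal polynomials -/

/-- Rank-one updates change the determinant affinely, over any commutative ring. -/
lemma det_add_smul_vecMulVec {R : Type*} [CommRing R] {n : ℕ} (M : Matrix (Fin n) (Fin n) R)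
    (u w : Fin n → R) (t : R) :
    (M + t • vecMulVec u w).det =
      M.det + t * (fromBlocks M (replicateCol Unit u) (-replicateRow Unit w) 0).det := by
  have key : ∀ s : R, (fromBlocks M (replicateCol Unit u) (-(s • replicateRow Unit w)) 1).det =
      (M + s • vecMulVec u w).det := by
    intro s
    rw [det_fromBlocks_one₂₂, Matrix.mul_neg, Matrix.mul_smul, sub_neg_eq_add, ← vecMulVec_eq]
  have hrow : ∀ s : R, fromBlocks M (replicateCol Unit u) (-(s • replicateRow Unit w)) 1 =
      (fromBlocks M (replicateCol Unit u) (0 : Matrix Unit (Fin n) R) (0 : Matrix Unit Unit R)).updateRow (Sum.inr ())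
        (s • Sum.elim (-w) (0 : Unit → R) + Sum.elim (0 : Fin n → R) (1 : Unit → R)) := by
    intro s
    ext i j
    rcases i with i | i <;> rcases j with j | j <;> simp [Matrix.updateRow_apply]
  have h0 := key 0
  have ht := key t
  rw [hrow, det_updateRow_add, det_updateRow_smul] at h0 ht
  have hG : (fromBlocks M (replicateCol Unit u) (-replicateRow Unit w) (0 : Matrix Unit Unit R)) =
      (fromBlocks M (replicateCol Unit u) (0 : Matrix Unit (Fin n) R) (0 : Matrix Unit Unit R)).updateRow (Sum.inr ())
        (Sum.elim (-w) (0 : Unit → R)) := by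
    ext i j
    rcases i with i | i <;> rcases j with j | j <;> simp [Matrix.updateRow_apply]
  rw [hG]
  simp only [zero_smul, add_zero, zero_mul, zero_add] at h0
  rw [← ht, ← h0]
  ring

lemma pderiv_prod_eq_zero {σ ι : Type*} (k : σ) (s : Finset ι) (f : ι → MvPolynomial σ ℝ)
    (h : ∀ i, pderiv k (f i) = 0) : pderiv k (∏ i ∈ s, f i) = 0 := by
  classical
  induction s using Finset.induction_on with
  | empty => simp
  | insert a s ha ih => rw [Finset.prod_insert ha, pderiv_mul, h, ih]; simp

lemma pderiv_det_eq_zero {σ ι : Type*} [Fintype ι] [DecidableEq ι] (k : σ)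
    (M : Matrix ι ι (MvPolynomial σ ℝ)) (h : ∀ i j, pderiv k (M i j) = 0) :
    pderiv k M.det = 0 := by
  rw [det_apply, map_sum]
  refine Finset.sum_eq_zero fun g _ => ?_
  rcases Int.units_eq_one_or (Equiv.Perm.sign g) with hg | hg <;>
    simp [hg, pderiv_prod_eq_zero k _ _ (fun i => h (g i) i)]

/-- The matrix pencil `z I + A + ∑ xᵢ vᵢ vᵢᵀ` with `z = X none`, `xᵢ = X (some i)`. -/
noncomputable def pencil {n m : ℕ} (v : Fin m → Fin n → ℝ) (A : Matrix (Fin n) (Fin n) ℝ) :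
    Matrix (Fin n) (Fin n) (MvPolynomial (Option (Fin m)) ℝ) :=
  (X none : MvPolynomial (Option (Fin m)) ℝ) • 1 + A.map C +
    ∑ i, (X (some i) : MvPolynomial (Option (Fin m)) ℝ) •
      vecMulVec (fun j => C (v i j)) (fun j => C (v i j))

/-- The polynomial `det (z I + A + ∑ xᵢ vᵢ vᵢᵀ)`. -/
noncomputable def pencilDet {n m : ℕ} (v : Fin m → Fin n → ℝ) (A : Matrix (Fin n) (Fin n) ℝ) :
    MvPolynomial (Option (Fin m)) ℝ := (pencil v A).det

lemma aeval_pencilDet {n m : ℕ} (v : Fin m → Fin n → ℝ) (A : Matrix (Fin n) (Fin n) ℝ)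
    {R : Type*} [CommRing R] [Algebra ℝ R] (pt : Option (Fin m) → R) :
    aeval pt (pencilDet v A) = (pt none • (1 : Matrix (Fin n) (Fin n) R) + A.map (algebraMap ℝ R) +
      ∑ i, pt (some i) • vecMulVec (fun j => algebraMap ℝ R (v i j))
        (fun j => algebraMap ℝ R (v i j))).det := by
  rw [pencilDet, AlgHom.map_det]
  congr 1
  ext i j
  simp [pencil, Matrix.add_apply, Matrix.sum_apply, Matrix.one_apply, vecMulVec_apply, apply_ite]

/-- `det (z I + A + ξ vᵢ vᵢᵀ + ∑ xₖ vₖ vₖᵀ)` is an affine function of `xᵢ + ξ` whose coefficients do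
not involve `xᵢ`. -/
lemma pencilDet_affine {n m : ℕ} (v : Fin m → Fin n → ℝ) (A : Matrix (Fin n) (Fin n) ℝ)
    (i : Fin m) : ∃ a b : MvPolynomial (Option (Fin m)) ℝ, pderiv (some i) a = 0 ∧
      pderiv (some i) b = 0 ∧
      ∀ ξ : ℝ, pencilDet v (A + ξ • vecMulVec (v i) (v i)) = a + (X (some i) + C ξ) * b := by
  classical
  set M : Matrix (Fin n) (Fin n) (MvPolynomial (Option (Fin m)) ℝ) :=
    (X none : MvPolynomial (Option (Fin m)) ℝ) • 1 + A.map C +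
    ∑ k ∈ Finset.univ.erase i, (X (some k) : MvPolynomial (Option (Fin m)) ℝ) •
      vecMulVec (fun j => C (v k j)) (fun j => C (v k j)) with hM
  have hMd : ∀ j k, pderiv (some i) (M j k) = 0 := by
    intro j k
    simp only [hM, Matrix.add_apply, Matrix.smul_apply, Matrix.map_apply, Matrix.sum_apply,
      smul_eq_mul, map_add, map_sum, pderiv_C, vecMulVec_apply, pderiv_mul, Matrix.one_apply]
    rw [Finset.sum_eq_zero]
    · split_ifs <;> simp
    · intro l hl
      have : some l ≠ some i := by simpa using Finset.ne_of_mem_erase hl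
      simp [this]
  refine ⟨M.det, (fromBlocks M (replicateCol Unit fun j => C (v i j))
    (-replicateRow Unit fun j => C (v i j)) 0).det, pderiv_det_eq_zero _ _ hMd,
    pderiv_det_eq_zero _ _ ?_, fun ξ => ?_⟩
  · intro j k
    rcases j with j | j <;> rcases k with k | k <;> simp [hMd]
  · rw [← det_add_smul_vecMulVec, pencilDet]
    congr 1
    rw [pencil, ← Finset.add_sum_erase _ _ (Finset.mem_univ i), hM, add_smul]
    have : (A + ξ • vecMulVec (v i) (v i)).map
        (C : ℝ →+* MvPolynomial (Option (Fin m)) ℝ) = A.map C +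
        (C ξ : MvPolynomial (Option (Fin m)) ℝ) •
          vecMulVec (fun j => C (v i j)) (fun j => C (v i j)) := by
      ext j k; simp [vecMulVec_apply]
    rw [this]
    abel

/-- A kernel vector `u` of the pencil would give `Im (u* M u) = 0`, whereas `Im (u* M u)` is at least
`Im z ‖u‖² > 0`. -/
lemma stable_pencilDet {n m : ℕ} (v : Fin m → Fin n → ℝ) {A : Matrix (Fin n) (Fin n) ℝ}
    (hA : A.IsSymm) : Stable (pencilDet v A) := by
  intro pt h0 h1 h
  rw [aeval_pencilDet] at h
  obtain ⟨u, hu, hMu⟩ := Matrix.exists_mulVec_eq_zero_iff.2 h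
  have h2 : star u ⬝ᵥ ((pt none • (1 : Matrix (Fin n) (Fin n) ℂ) + A.map (algebraMap ℝ ℂ) +
      ∑ i, pt (some i) • vecMulVec (fun j => algebraMap ℝ ℂ (v i j))
        (fun j => algebraMap ℝ ℂ (v i j))) *ᵥ u) = 0 := by rw [hMu, dotProduct_zero]
  have hAh : (A.map (algebraMap ℝ ℂ)).IsHermitian := by
    ext j k
    simp [Matrix.conjTranspose_apply, hA.apply]
  have hAi : (star u ⬝ᵥ (A.map (algebraMap ℝ ℂ) *ᵥ u)).im = 0 := by
    have := hAh.im_star_dotProduct_mulVec_self u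
    simpa using this
  have hV : ∀ i, star u ⬝ᵥ (vecMulVec (fun j => algebraMap ℝ ℂ (v i j))
        (fun j => algebraMap ℝ ℂ (v i j)) *ᵥ u) =
        ((Complex.normSq ((fun j => algebraMap ℝ ℂ (v i j)) ⬝ᵥ u) : ℝ) : ℂ) := by
    intro i
    have hs : star u ⬝ᵥ (fun j => algebraMap ℝ ℂ (v i j)) =
        star ((fun j => algebraMap ℝ ℂ (v i j)) ⬝ᵥ u) := by
      simp [dotProduct, mul_comm]
    rw [vecMulVec_mulVec, dotProduct_smul, hs, Complex.normSq_eq_conj_mul_self]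
    rfl
  have h1u : star u ⬝ᵥ u = ((∑ j, Complex.normSq (u j) : ℝ) : ℂ) := by
    simp [dotProduct, Complex.normSq_eq_conj_mul_self]
  rw [add_mulVec, add_mulVec, dotProduct_add, dotProduct_add, smul_mulVec, one_mulVec,
    dotProduct_smul, h1u, Matrix.sum_mulVec, dotProduct_sum] at h2
  simp only [smul_mulVec, dotProduct_smul, hV, smul_eq_mul] at h2
  have h3 := congrArg Complex.im h2
  rw [Complex.add_im, Complex.add_im, hAi, Complex.im_sum] at h3
  simp only [Complex.im_mul_ofReal, Complex.zero_im] at h3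
  have h4 : 0 ≤ ∑ i, (pt (some i)).im *
      Complex.normSq ((fun j => algebraMap ℝ ℂ (v i j)) ⬝ᵥ u) :=
    Finset.sum_nonneg fun i _ => mul_nonneg (h1 i) (Complex.normSq_nonneg _)
  have h5 : 0 < ∑ j, Complex.normSq (u j) := by
    obtain ⟨j, hj⟩ := Function.ne_iff.1 hu
    exact Finset.sum_pos' (fun j _ => Complex.normSq_nonneg _)
      ⟨j, Finset.mem_univ _, Complex.normSq_pos.2 hj⟩
  have := mul_pos h0 h5
  linarith

/-- The product `det (z + A + ∑ xᵢ vᵢ vᵢᵀ) · det (z - A + ∑ xᵢ vᵢ vᵢᵀ)`. At `x = 0`, its largest zero in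
`z` is the spectral norm of the symmetric matrix `A`, so it controls both sides of the spectrum. -/
noncomputable def pair {n m : ℕ} (v : Fin m → Fin n → ℝ) (A : Matrix (Fin n) (Fin n) ℝ) :
    MvPolynomial (Option (Fin m)) ℝ := pencilDet v A * pencilDet v (-A)

lemma stable_pair {n m : ℕ} (v : Fin m → Fin n → ℝ) {A : Matrix (Fin n) (Fin n) ℝ}
    (hA : A.IsSymm) : Stable (pair v A) :=
  (stable_pencilDet v hA).mul (stable_pencilDet v hA.neg)

lemma degTwo_pair {n m : ℕ} (v : Fin m → Fin n → ℝ) (A : Matrix (Fin n) (Fin n) ℝ) :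
    DegTwo (pair v A) := by
  intro i
  obtain ⟨a, b, ha, hb, h⟩ := pencilDet_affine v A i
  obtain ⟨a', b', ha', hb', h'⟩ := pencilDet_affine v (-A) i
  have e := h 0
  have e' := h' 0
  rw [zero_smul, add_zero] at e e'
  rw [pair, e, e']
  simp [ha, hb, ha', hb']

/-- Averaging over a Bernoulli(`s`) choice of adding `vᵢ vᵢᵀ` to `B` amounts to replacing `B` by its
mean and applying `1 - (s(1-s)/2) ∂ᵢ²`. Both determinants are affine in `xᵢ`, with the sign of
the random shift opposite in the two factors, so only the variance term survives. -/
lemma pair_mix {n m : ℕ} (v : Fin m → Fin n → ℝ) (B : Matrix (Fin n) (Fin n) ℝ) (i : Fin m)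
    (s : ℝ) :
    s • pair v (B + vecMulVec (v i) (v i)) + (1 - s) • pair v B =
      T i (s * (1 - s)) (pair v (B + s • vecMulVec (v i) (v i))) := by
  obtain ⟨a, b, ha, hb, h⟩ := pencilDet_affine v B i
  obtain ⟨a', b', ha', hb', h'⟩ := pencilDet_affine v (-B) i
  have e : ∀ ξ : ℝ, pair v (B + ξ • vecMulVec (v i) (v i)) =
      (a + (X (some i) + C ξ) * b) * (a' + (X (some i) + C (-ξ)) * b') := by
    intro ξ
    rw [pair, h, neg_add, ← neg_smul, h']
  have e1 := e 1
  have e0 := e 0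
  rw [one_smul] at e1
  rw [zero_smul, add_zero] at e0
  rw [T_apply, e, e1, e0]
  simp only [pderiv_mul, ha, hb, ha', hb', map_add, pderiv_X_self, pderiv_C, pderiv_one, smul_eq_C_mul,
    map_neg, map_one, map_zero, zero_mul, mul_zero, add_zero, zero_add,
    one_mul, map_sub]
  have hC2 : (C (s * (1 - s) / 2) : MvPolynomial (Option (Fin m)) ℝ) * 2 = C s * (1 - C s) := by
    rw [show (2 : MvPolynomial (Option (Fin m)) ℝ) = C 2 from rfl, ← C_mul,
      show s * (1 - s) / 2 * 2 = s * (1 - s) by ring]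
    simp
  linear_combination b * b' * hC2

/-! ### Interlacing -/

/-- The polynomial is monic of degree exactly `d`, in a form convenient for linear combinations. -/
def MonicDeg (d : ℕ) (f : Polynomial ℝ) : Prop := f.natDegree ≤ d ∧ f.coeff d = 1

lemma MonicDeg.mix {d : ℕ} {f g : Polynomial ℝ} (hf : MonicDeg d f) (hg : MonicDeg d g) (s : ℝ) :
    MonicDeg d (s • f + (1 - s) • g) := by
  refine ⟨Polynomial.natDegree_add_le_of_degree_le ((Polynomial.natDegree_smul_le _ _).trans hf.1)
    ((Polynomial.natDegree_smul_le _ _).trans hg.1), ?_⟩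
  simp [hf.2, hg.2]

lemma MonicDeg.monic {d : ℕ} {f : Polynomial ℝ} (hf : MonicDeg d f) : f.Monic :=
  Polynomial.monic_of_natDegree_le_of_coeff_eq_one d hf.1 hf.2

lemma MonicDeg.natDegree {d : ℕ} {f : Polynomial ℝ} (hf : MonicDeg d f) : f.natDegree = d :=
  Polynomial.natDegree_eq_of_le_of_coeff_ne_zero hf.1 (by rw [hf.2]; exact one_ne_zero)

/-- The polynomial has no zeros in the open upper half plane; for real coefficients this says that all
its zeros are real. -/
def UpperFree (f : Polynomial ℝ) : Prop := ∀ z : ℂ, 0 < z.im → Polynomial.aeval z f ≠ 0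

/-- All roots are real and less than `c`, hence at distance at least `t - c` from `t`. -/
lemma lower_bound {d : ℕ} {f : Polynomial ℝ} (hf : MonicDeg d f) (hu : UpperFree f) {c : ℝ}
    (hpos : ∀ t, c ≤ t → 0 < f.eval t) {t : ℝ} (ht : c ≤ t) : (t - c) ^ d ≤ f.eval t := by
  set F : Polynomial ℂ := f.map (algebraMap ℝ ℂ) with hF
  have hFm : F.Monic := hf.monic.map _
  have hroot : ∀ r ∈ F.roots, t - c ≤ ‖(t : ℂ) - r‖ := by
    intro r hr
    have h0 : Polynomial.aeval r f = 0 := by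
      have := (Polynomial.mem_roots'.1 hr).2
      rwa [Polynomial.IsRoot, hF, Polynomial.eval_map_algebraMap] at this
    have him : r.im = 0 := by
      rcases lt_trichotomy r.im 0 with h | h | h
      · exfalso
        refine hu (starRingEnd ℂ r) (by simpa using h) ?_
        rw [Polynomial.aeval_conj, h0, map_zero]
      · exact h
      · exact absurd h0 (hu r h)
    have hre : r = (r.re : ℂ) := Complex.ext (by simp) (by simp [him])
    have hrc : r.re < c := by
      by_contra hc
      push Not at hc
      have h2 := hpos _ hc
      rw [hre, ← Complex.coe_algebraMap, Polynomial.aeval_algebraMap_apply] at h0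
      have h3 : f.eval r.re = 0 := by simpa using h0
      linarith
    calc t - c ≤ t - r.re := by linarith
      _ ≤ |t - r.re| := le_abs_self _
      _ = ‖(t : ℂ) - r‖ := by rw [hre, ← Complex.ofReal_sub, Complex.norm_real]; simp
  have hprod : ∀ s : Multiset ℂ, (∀ r ∈ s, t - c ≤ ‖(t : ℂ) - r‖) →
      (t - c) ^ (Multiset.card s) ≤ ‖(s.map fun r => (t : ℂ) - r).prod‖ := by
    intro s
    induction s using Multiset.induction_on with
    | empty => simp
    | cons a s ih =>
      intro hs
      rw [Multiset.map_cons, Multiset.prod_cons, norm_mul, Multiset.card_cons, pow_succ, mul_comm]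
      exact mul_le_mul (hs a (Multiset.mem_cons_self a s))
        (ih fun r hr => hs r (Multiset.mem_cons_of_mem hr))
        (pow_nonneg (by linarith) _) (norm_nonneg _)
  have h1 := hprod F.roots hroot
  rw [← (IsAlgClosed.splits F).eval_eq_prod_roots_of_monic hFm,
    ← (IsAlgClosed.splits F).natDegree_eq_card_roots, hF, Polynomial.natDegree_map,
    hf.natDegree] at h1
  rw [← Complex.coe_algebraMap, Polynomial.eval_map_algebraMap,
    Polynomial.aeval_algebraMap_apply] at h1
  simpa [abs_of_pos (hpos t ht)] using h1

lemma MonicDeg.eventually_pos {d : ℕ} {f : Polynomial ℝ} (hf : MonicDeg d f) :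
    ∃ t₁, ∀ t, t₁ ≤ t → 0 < f.eval t := by
  by_cases hd : d = 0
  · subst hd
    have : f = 1 := Polynomial.eq_one_of_monic_natDegree_zero hf.monic hf.natDegree
    exact ⟨0, by simp [this]⟩
  · have hdeg : 0 < f.degree := Polynomial.natDegree_pos_iff_degree_pos.1 (by
      rw [hf.natDegree]; omega)
    have := f.tendsto_atTop_of_leadingCoeff_nonneg hdeg (by rw [hf.monic.leadingCoeff]; norm_num)
    exact Filter.eventually_atTop.1 (this.eventually_gt_atTop 0)

/-- If all convex combinations of `f` and `h` are real-rooted, `h > 0` on `[c, ∞)` and `f c > 0`, then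
`f > 0` on `[c, ∞)`. Otherwise, moving from `h` towards `f`, a combination would first touch zero at
some `t₀ > c`, although combinations positive on `[c, ∞)` are at least `(t₀ - c)^d` at `t₀`. -/
lemma pos_of_mix {d : ℕ} {f h : Polynomial ℝ} (hf : MonicDeg d f) (hh : MonicDeg d h)
    (hmix : ∀ s : ℝ, 0 ≤ s → s ≤ 1 → UpperFree (s • f + (1 - s) • h)) {c : ℝ}
    (hpos : ∀ t, c ≤ t → 0 < h.eval t) (hfc : 0 < f.eval c) :
    ∀ t, c ≤ t → 0 < f.eval t := by
  by_contra hcon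
  push Not at hcon
  obtain ⟨t₂, ht₂, hft₂⟩ := hcon
  obtain ⟨t₁, ht₁⟩ := hf.eventually_pos
  have hne : (Set.Icc c (max t₁ t₂)).Nonempty := ⟨t₂, ht₂, le_max_right _ _⟩
  -- The first contact occurs at the minimiser `t₀` of `f / h`, for the weight `s = 1 / (1 + κ)`.
  have hcont : ContinuousOn (fun t => f.eval t / h.eval t) (Set.Icc c (max t₁ t₂)) :=
    (Polynomial.continuousOn _).div (Polynomial.continuousOn _)
      fun t ht => (hpos t ht.1).ne'
  obtain ⟨t₀, ht₀, hmin⟩ := isCompact_Icc.exists_isMinOn hne hcont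
  have hh0 := hpos t₀ ht₀.1
  set κ := -(f.eval t₀ / h.eval t₀) with hκ
  have hκ0 : 0 ≤ κ := by
    have h1 : f.eval t₀ / h.eval t₀ ≤ f.eval t₂ / h.eval t₂ := hmin ⟨ht₂, le_max_right _ _⟩
    have h2 : f.eval t₂ / h.eval t₂ ≤ 0 :=
      div_nonpos_of_nonpos_of_nonneg hft₂ (hpos t₂ ht₂).le
    linarith
  have hlow : ∀ t, c ≤ t → -κ * h.eval t ≤ f.eval t := by
    intro t ht
    have hht := hpos t ht
    rcases le_total t (max t₁ t₂) with h1 | h1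
    · have h2 : f.eval t₀ / h.eval t₀ ≤ f.eval t / h.eval t := hmin ⟨ht, h1⟩
      rw [hκ, neg_neg]
      exact (le_div_iff₀ hht).1 h2
    · have := ht₁ t ((le_max_left _ _).trans h1)
      nlinarith
  have hft₀ : f.eval t₀ = -κ * h.eval t₀ := by rw [hκ, neg_neg]; field_simp
  have hct₀ : c < t₀ := by
    rcases ht₀.1.eq_or_lt with h1 | h1
    · rw [← h1] at hft₀ hh0
      nlinarith
    · exact h1
  -- For `s < 1 / (1 + κ)` the mixture is positive on `[c, ∞)`
  have hs : ∀ s, 0 ≤ s → s < 1 / (1 + κ) →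
      (t₀ - c) ^ d ≤ s * f.eval t₀ + (1 - s) * h.eval t₀ := by
    intro s hs0 hs1
    have h1 : s * (1 + κ) < 1 := (lt_div_iff₀ (by linarith)).1 hs1
    have h2 : s ≤ 1 := by nlinarith
    have := lower_bound (hf.mix hh s) (hmix s hs0 h2) (c := c) ?_ ht₀.1
    · simpa using this
    · intro t ht
      have h3 := hlow t ht
      have h4 := hpos t ht
      simp only [Polynomial.eval_add, Polynomial.eval_smul, smul_eq_mul]
      nlinarith
  have hlim : (t₀ - c) ^ d ≤ 1 / (1 + κ) * f.eval t₀ + (1 - 1 / (1 + κ)) * h.eval t₀ := by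
    have hc : ContinuousWithinAt (fun s : ℝ => s * f.eval t₀ + (1 - s) * h.eval t₀)
      (Set.Iio (1 / (1 + κ))) (1 / (1 + κ)) := by fun_prop
    refine ge_of_tendsto hc ?_
    have : (0 : ℝ) < 1 / (1 + κ) := by positivity
    filter_upwards [Ioo_mem_nhdsLT this] with s hs'
    exact hs s hs'.1.le hs'.2
  have hzero : 1 / (1 + κ) * f.eval t₀ + (1 - 1 / (1 + κ)) * h.eval t₀ = 0 := by
    rw [hft₀]; field_simp; ring
  have : 0 < (t₀ - c) ^ d := pow_pos (by linarith) _
  linarith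

/-- If all convex combinations of two monic polynomials of the same degree are real-rooted and one of
them has no zeros on `[c, ∞)`, then one of the two polynomials has no zeros on `[c, ∞)`. -/
lemma interlacing {d : ℕ} {f g : Polynomial ℝ} (hf : MonicDeg d f) (hg : MonicDeg d g)
    (hmix : ∀ s : ℝ, 0 ≤ s → s ≤ 1 → UpperFree (s • f + (1 - s) • g)) {c s : ℝ} (hs0 : 0 ≤ s)
    (hs1 : s ≤ 1) (hpos : ∀ t, c ≤ t → 0 < (s • f + (1 - s) • g).eval t) :
    (∀ t, c ≤ t → 0 < f.eval t) ∨ (∀ t, c ≤ t → 0 < g.eval t) := by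
  have hc := hpos c le_rfl
  simp only [Polynomial.eval_add, Polynomial.eval_smul, smul_eq_mul] at hc
  rcases lt_or_ge 0 (f.eval c) with h | h
  · left
    refine pos_of_mix hf (hf.mix hg s) (fun r hr0 hr1 => ?_) hpos h
    have := hmix (r + (1 - r) * s) (by nlinarith) (by nlinarith)
    convert this using 1
    module
  · right
    have hgc : 0 < g.eval c := by
      by_contra hneg
      push Not at hneg
      nlinarith
    refine pos_of_mix hg (hf.mix hg s) (fun r hr0 hr1 => ?_) hpos hgc
    have := hmix ((1 - r) * s) (by nlinarith) (by nlinarith)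
    convert this using 1
    module

/-! ### The expected polynomial and the choice of the subset -/

/-- The composition of the operators `1 - (xᵢ(1-xᵢ)/2) ∂ᵢ²` over `i ∈ L`. Applied to `pair v A`, it
gives the expected value of `pair v (A + ∑ (ξᵢ - xᵢ) vᵢ vᵢᵀ)` over independent Bernoulli(`xᵢ`)
variables `ξᵢ`, `i ∈ L`. -/
noncomputable def TL {m : ℕ} (x : Fin m → ℝ) : List (Fin m) →
    (MvPolynomial (Option (Fin m)) ℝ →ₗ[ℝ] MvPolynomial (Option (Fin m)) ℝ)
  | [] => LinearMap.id
  | i :: L => TL x L ∘ₗ T i (x i * (1 - x i))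

/-- Specialisation `x = 0`, leaving a univariate polynomial in `z`. -/
noncomputable def Z {m : ℕ} : MvPolynomial (Option (Fin m)) ℝ →ₐ[ℝ] Polynomial ℝ :=
  line (0 : Option (Fin m) → ℝ) (Pi.single none 1)

lemma eval_Z {m : ℕ} (p : MvPolynomial (Option (Fin m)) ℝ) (z : ℝ) :
    (Z p).eval z = eval (Pi.single none z) p := by
  rw [Z, eval_line, ← MvPolynomial.coe_aeval_eq_eval]
  show _ = aeval _ p
  congr 2
  funext k
  cases k <;> simp

lemma aeval_Z {m : ℕ} (p : MvPolynomial (Option (Fin m)) ℝ) (z : ℂ) :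
    Polynomial.aeval z (Z p) = aeval (Pi.single none z : Option (Fin m) → ℂ) p := by
  have : ((Polynomial.aeval z).comp Z : MvPolynomial (Option (Fin m)) ℝ →ₐ[ℝ] ℂ) =
      aeval (Pi.single none z : Option (Fin m) → ℂ) := by
    apply MvPolynomial.algHom_ext
    intro k
    cases k <;> simp [Z, line]
  exact congrArg (fun F => F p) this

lemma Stable.upperFree {m : ℕ} {p : MvPolynomial (Option (Fin m)) ℝ} (hp : Stable p) :
    UpperFree (Z p) := by
  intro z hz
  rw [aeval_Z]
  exact hp _ (by simpa using hz) (by simp)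

lemma Stable.TL {m : ℕ} {x : Fin m → ℝ} (hx : ∀ i, 0 ≤ x i ∧ x i ≤ 1) (L : List (Fin m))
    {p : MvPolynomial (Option (Fin m)) ℝ} (hp : Stable p) : Stable (TL x L p) := by
  induction L generalizing p with
  | nil => exact hp
  | cons i L ih => exact ih (hp.T i (mul_nonneg (hx i).1 (by linarith [(hx i).2])))

lemma Z_pencilDet {n m : ℕ} (v : Fin m → Fin n → ℝ) (A : Matrix (Fin n) (Fin n) ℝ) :
    Z (pencilDet v A) = (-A).charpoly := by
  rw [Z, line, aeval_pencilDet, Matrix.charpoly]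
  congr 1
  ext1 i j
  simp [Matrix.charmatrix_apply, Matrix.diagonal_apply, Matrix.one_apply]

lemma monicDeg_pair {n m : ℕ} (v : Fin m → Fin n → ℝ) (A : Matrix (Fin n) (Fin n) ℝ) :
    MonicDeg (n + n) (Z (pair v A)) := by
  rw [pair, map_mul, Z_pencilDet, Z_pencilDet]
  have h := (Matrix.charpoly_monic (-A)).mul (Matrix.charpoly_monic (- -A))
  have hd : ((-A).charpoly * (- -A).charpoly).natDegree = n + n := by
    rw [(Matrix.charpoly_monic (-A)).natDegree_mul (Matrix.charpoly_monic (- -A)),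
      Matrix.charpoly_natDegree_eq_dim, Matrix.charpoly_natDegree_eq_dim, Fintype.card_fin]
  refine ⟨hd.le, ?_⟩
  rw [← hd]
  exact h

/-- Conditioning the expected polynomial on whether `i` is selected. -/
lemma TL_cons_pair {n m : ℕ} (v : Fin m → Fin n → ℝ) (x : Fin m → ℝ) (i : Fin m)
    (L : List (Fin m)) (A : Matrix (Fin n) (Fin n) ℝ) :
    TL x (i :: L) (pair v A) =
      x i • TL x L (pair v (A - x i • vecMulVec (v i) (v i) + vecMulVec (v i) (v i))) +
        (1 - x i) • TL x L (pair v (A - x i • vecMulVec (v i) (v i))) := by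
  rw [← map_smul, ← map_smul, ← map_add, pair_mix, sub_add_cancel]
  rfl

lemma monicDeg_TL {n m : ℕ} (v : Fin m → Fin n → ℝ) (x : Fin m → ℝ) (L : List (Fin m))
    (A : Matrix (Fin n) (Fin n) ℝ) : MonicDeg (n + n) (Z (TL x L (pair v A))) := by
  induction L generalizing A with
  | nil => exact monicDeg_pair v A
  | cons i L ih =>
    rw [TL_cons_pair, map_add, map_smul, map_smul]
    exact (ih _).mix (ih _) _

lemma isSymm_vecMulVec {n : ℕ} (u : Fin n → ℝ) : (vecMulVec u u).IsSymm := by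
  ext i j; simp [vecMulVec_apply, mul_comm]

/-- If the expected polynomial has no zeros on `[c, ∞)`, then the same holds for the polynomial of
some choice of the subset, the elements of `L` being decided one after the other by interlacing. -/
lemma exists_rounding {n m : ℕ} (v : Fin m → Fin n → ℝ) {x : Fin m → ℝ}
    (hx : ∀ i, 0 ≤ x i ∧ x i ≤ 1) {c : ℝ} (L : List (Fin m)) (hL : L.Nodup)
    {A : Matrix (Fin n) (Fin n) ℝ} (hA : A.IsSymm)
    (hpos : ∀ z, c ≤ z → 0 < (Z (TL x L (pair v A))).eval z) :
    ∃ S ⊆ L.toFinset, ∀ z, c ≤ z → 0 < (Z (pair v (A + ∑ i ∈ S, vecMulVec (v i) (v i) -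
      ∑ i ∈ L.toFinset, x i • vecMulVec (v i) (v i)))).eval z := by
  induction L generalizing A with
  | nil =>
    rw [show TL x [] (pair v A) = pair v A from rfl] at hpos
    exact ⟨∅, by simp, by simpa using hpos⟩
  | cons i L ih =>
    obtain ⟨hiL, hL⟩ := List.nodup_cons.1 hL
    have hiL' : i ∉ L.toFinset := by simpa using hiL
    set V := vecMulVec (v i) (v i) with hV
    have hB : (A - x i • V).IsSymm := hA.sub ((isSymm_vecMulVec _).smul _)
    have hB' : (A - x i • V + V).IsSymm := hB.add (isSymm_vecMulVec _)
    rw [TL_cons_pair, map_add, map_smul, map_smul] at hpos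
    have hmix : ∀ s : ℝ, 0 ≤ s → s ≤ 1 → UpperFree
        (s • Z (TL x L (pair v (A - x i • V + V))) +
          (1 - s) • Z (TL x L (pair v (A - x i • V)))) := by
      intro s hs0 hs1
      rw [← map_smul, ← map_smul, ← map_smul, ← map_smul, ← map_add, ← map_add, pair_mix]
      refine Stable.upperFree (Stable.TL hx L (Stable.T (stable_pair v ?_) i ?_))
      · exact hB.add ((isSymm_vecMulVec _).smul _)
      · exact mul_nonneg hs0 (by linarith)
    rcases interlacing (monicDeg_TL v x L _) (monicDeg_TL v x L _) hmix (hx i).1 (hx i).2 hpos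
      with h | h
    · obtain ⟨S, hS, h⟩ := ih hL hB' h
      refine ⟨insert i S, ?_, ?_⟩
      · rw [List.toFinset_cons]; exact Finset.insert_subset_insert _ hS
      · intro z hz
        have := h z hz
        rw [List.toFinset_cons, Finset.sum_insert hiL', Finset.sum_insert (fun hi => hiL' (hS hi))]
        convert this using 4
        rw [← hV]; abel
    · obtain ⟨S, hS, h⟩ := ih hL hB h
      refine ⟨S, ?_, ?_⟩
      · rw [List.toFinset_cons]; exact hS.trans (Finset.subset_insert _ _)
      · intro z hz
        have := h z hz
        rw [List.toFinset_cons, Finset.sum_insert hiL']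
        convert this using 4
        rw [← hV]; abel

/-- The whole chain of operators preserves the barrier bound `φ`, moving coordinate `i` of the orthant
by `φ xᵢ (1 - xᵢ)`. -/
lemma barrier_TL {m : ℕ} {x : Fin m → ℝ} (hx : ∀ i, 0 ≤ x i ∧ x i ≤ 1) {z φ : ℝ} (hφ : 0 ≤ φ)
    (L : List (Fin m)) (hL : L.Nodup) {p : MvPolynomial (Option (Fin m)) ℝ} (hp : Stable p)
    (hdeg : DegTwo p) {w : Fin m → ℝ} (hb : Barrier z w φ p) :
    Barrier z (fun i => w i + if i ∈ L then φ * (x i * (1 - x i)) else 0) φ (TL x L p) := by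
  induction L generalizing p w with
  | nil =>
    rw [show TL x [] p = p from rfl]
    simpa using hb
  | cons i L ih =>
    obtain ⟨hiL, hL⟩ := List.nodup_cons.1 hL
    have hτ : 0 ≤ x i * (1 - x i) := mul_nonneg (hx i).1 (by linarith [(hx i).2])
    have h1 := barrier_step hp hdeg hb i hτ (δ := φ * (x i * (1 - x i))) (by linarith)
      (mul_nonneg hφ hτ)
    have h2 := ih hL (hp.T i hτ) (hdeg.T i _) h1
    rw [show TL x (i :: L) p = TL x L (T i (x i * (1 - x i)) p) from rfl]
    convert h2 using 1
    funext k
    by_cases hk : k = i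
    · subst hk; simp [hiL]
    · simp [hk]

lemma quadForm {n m : ℕ} (v : Fin m → Fin n → ℝ) (z : ℝ) (y : Fin m → ℝ) (u : Fin n → ℝ) :
    u ⬝ᵥ ((z • (1 : Matrix (Fin n) (Fin n) ℝ) + ∑ i, y i • vecMulVec (v i) (v i)) *ᵥ u) =
      z * (u ⬝ᵥ u) + ∑ i, y i * (v i ⬝ᵥ u) ^ 2 := by
  rw [add_mulVec, smul_mulVec, one_mulVec, dotProduct_add, dotProduct_smul, Matrix.sum_mulVec,
    dotProduct_sum, smul_eq_mul]
  congr 1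
  refine Finset.sum_congr rfl fun i _ => ?_
  rw [smul_mulVec, dotProduct_smul, vecMulVec_mulVec, dotProduct_smul, dotProduct_comm u (v i),
    smul_eq_mul, op_smul_eq_mul, sq]

lemma eval_pencilDet_zero {n m : ℕ} (v : Fin m → Fin n → ℝ) (y : Option (Fin m) → ℝ) :
    eval y (pencilDet v 0) =
      (y none • (1 : Matrix (Fin n) (Fin n) ℝ) + ∑ i, y (some i) • vecMulVec (v i) (v i)).det := by
  have := aeval_pencilDet v 0 y
  rw [← MvPolynomial.coe_aeval_eq_eval]
  show aeval y _ = _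
  rw [this]
  simp

/-- The initial barrier: for `z ≥ 8ε` and `xᵢ ≥ -2ε xᵢ(1-xᵢ)` (the left `xᵢ` being the variable and the
right ones the given weights), the pencil is at least `6ε I ⪰ ε⁻¹ vⱼ vⱼᵀ`, so that the
logarithmic derivatives of its determinant are at most `ε`, and those of its square at most `2ε`. -/
lemma barrier_init {n m : ℕ} (v : Fin m → Fin n → ℝ) {x : Fin m → ℝ} {ε : ℝ} (hε : 0 < ε)
    (hsum : (∑ i, x i • vecMulVec (v i) (v i)) = (1 : Matrix (Fin n) (Fin n) ℝ))
    (hv : ∀ i, v i ⬝ᵥ v i ≤ ε ^ 2) {z : ℝ} (hz : 8 * ε ≤ z) :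
    Barrier z (fun i => -(2 * ε * (x i * (1 - x i)))) (2 * ε) (pair v 0) := by
  have hId : ∀ u : Fin n → ℝ, ∑ i, x i * (v i ⬝ᵥ u) ^ 2 = u ⬝ᵥ u := by
    intro u
    have := quadForm v 0 x u
    rw [hsum, zero_smul, zero_add, one_mulVec, zero_mul, zero_add] at this
    exact this.symm
  intro y hy
  have hlow : ∀ u : Fin n → ℝ, 6 * ε * (u ⬝ᵥ u) ≤
      z * (u ⬝ᵥ u) + ∑ i, y (some i) * (v i ⬝ᵥ u) ^ 2 := by
    intro u
    have h1 : ∑ i, (-(2 * ε)) * (x i * (v i ⬝ᵥ u) ^ 2) ≤ ∑ i, y (some i) * (v i ⬝ᵥ u) ^ 2 := by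
      refine Finset.sum_le_sum fun i _ => ?_
      rw [← mul_assoc]
      refine mul_le_mul_of_nonneg_right (le_trans ?_ (hy.2 i)) (sq_nonneg _)
      nlinarith [mul_nonneg hε.le (sq_nonneg (x i))]
    rw [← Finset.mul_sum, hId] at h1
    have h2 : 0 ≤ u ⬝ᵥ u := by
      simpa using dotProduct_star_self_nonneg u
    nlinarith
  have hherm : ∀ y : Fin m → ℝ, (z • (1 : Matrix (Fin n) (Fin n) ℝ) +
      ∑ i, y i • vecMulVec (v i) (v i)).IsHermitian := by
    intro y
    rw [Matrix.IsHermitian, conjTranspose_eq_transpose_of_trivial]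
    ext j k
    simp [Matrix.transpose_apply, Matrix.add_apply, Matrix.sum_apply, Matrix.one_apply,
      vecMulVec_apply, mul_comm, eq_comm]
  have hDpos : 0 < eval y (pencilDet v 0) := by
    rw [eval_pencilDet_zero, hy.1]
    refine Matrix.PosDef.det_pos (Matrix.PosDef.of_dotProduct_mulVec_pos (hherm _) ?_)
    intro u hu
    have h2 : 0 < u ⬝ᵥ u := by
      simpa using dotProduct_star_self_pos_iff.2 hu
    have h3 : u ⬝ᵥ _ = _ := quadForm v z (fun i => y (some i)) u
    simp only [star_trivial]
    rw [h3]
    have := hlow u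
    nlinarith
  have hpair : pair v (0 : Matrix (Fin n) (Fin n) ℝ) = pencilDet v 0 * pencilDet v 0 := by
    rw [pair, neg_zero]
  refine ⟨by rw [hpair, map_mul]; positivity, fun j => ?_⟩
  obtain ⟨a, b, ha, hb, h⟩ := pencilDet_affine v 0 j
  have hD := h 0
  rw [zero_smul, add_zero, map_zero, add_zero] at hD
  have hder : pderiv (some j) (pencilDet v 0) = b := by
    rw [hD]; simp [ha, hb]
  have hder0 : pderiv (some j) (pderiv (some j) (pencilDet v 0)) = 0 := by rw [hder, hb]
  -- Removing `ε⁻¹ vⱼ vⱼᵀ` keeps the pencil positive semidefinite; as the determinant is affine in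
  -- `xⱼ`, this bounds its derivative by `ε` times its value.
  have hnonneg : 0 ≤ eval (y + Pi.single (some j) (-ε⁻¹)) (pencilDet v 0) := by
    obtain ⟨w, hw⟩ : ∃ w : Option (Fin m) → ℝ, w = y + Pi.single (some j) (-ε⁻¹) := ⟨_, rfl⟩
    rw [← hw, eval_pencilDet_zero, show w none = z by rw [hw]; simpa using hy.1]
    refine Matrix.PosSemidef.det_nonneg (Matrix.PosSemidef.of_dotProduct_mulVec_nonneg
      (hherm fun i => w (some i)) ?_)
    intro u
    have h3 : u ⬝ᵥ _ = _ := quadForm v z (fun i => w (some i)) u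
    simp only [star_trivial]
    rw [h3]
    have h4 : ∑ i, w (some i) * (v i ⬝ᵥ u) ^ 2 =
        ∑ i, y (some i) * (v i ⬝ᵥ u) ^ 2 - ε⁻¹ * (v j ⬝ᵥ u) ^ 2 := by
      simp [hw, add_mul, Finset.sum_add_distrib, Pi.single_apply, sub_eq_add_neg]
    rw [h4]
    have h5 : (v j ⬝ᵥ u) ^ 2 ≤ ε ^ 2 * (u ⬝ᵥ u) := by
      have hcs : (v j ⬝ᵥ u) ^ 2 ≤ (v j ⬝ᵥ v j) * (u ⬝ᵥ u) := by
        simp only [dotProduct, ← sq]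
        exact Finset.sum_mul_sq_le_sq_mul_sq _ _ _
      have h2 : 0 ≤ u ⬝ᵥ u := by
        simpa using dotProduct_star_self_nonneg u
      exact hcs.trans (mul_le_mul_of_nonneg_right (hv j) h2)
    have h6 : ε⁻¹ * (v j ⬝ᵥ u) ^ 2 ≤ ε * (u ⬝ᵥ u) := by
      rw [inv_mul_le_iff₀ hε]; nlinarith
    have h2 : 0 ≤ u ⬝ᵥ u := by
      simpa using dotProduct_star_self_nonneg u
    have := hlow u
    nlinarith
  rw [eval_add_single (by rw [hder0, map_zero]), hder0, map_zero] at hnonneg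
  have h7 : eval y (pderiv (some j) (pencilDet v 0)) ≤ ε * eval y (pencilDet v 0) := by
    have : ε⁻¹ * eval y (pderiv (some j) (pencilDet v 0)) ≤ eval y (pencilDet v 0) := by linarith
    exact (inv_mul_le_iff₀ hε).1 this
  rw [hpair, pderiv_mul]
  simp only [map_mul, map_add]
  nlinarith [mul_le_mul_of_nonneg_right h7 hDpos.le]

/-- All eigenvalues of `B` are at least `-c` when `z + B` is nonsingular for every `z ≥ c`. -/
lemma posSemidef_of_det {n : ℕ} {B : Matrix (Fin n) (Fin n) ℝ} (hB : B.IsSymm) {c : ℝ}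
    (h : ∀ z, c ≤ z → (z • (1 : Matrix (Fin n) (Fin n) ℝ) + B).det ≠ 0) :
    (c • (1 : Matrix (Fin n) (Fin n) ℝ) + B).PosSemidef := by
  have hH : (c • (1 : Matrix (Fin n) (Fin n) ℝ) + B).IsHermitian := by
    rw [Matrix.IsHermitian, conjTranspose_eq_transpose_of_trivial, transpose_add, hB.eq]
    simp
  rw [hH.posSemidef_iff_eigenvalues_nonneg]
  intro k
  by_contra hneg
  simp only [Pi.zero_apply, not_le] at hneg
  refine h (c - hH.eigenvalues k) (by linarith) (Matrix.exists_mulVec_eq_zero_iff.1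
    ⟨WithLp.ofLp (hH.eigenvectorBasis k), ?_, ?_⟩)
  · intro h0
    exact hH.eigenvectorBasis.orthonormal.ne_zero k (by
      ext j; simpa using congrFun h0 j)
  · have := hH.mulVec_eigenvectorBasis k
    rw [add_mulVec, smul_mulVec, one_mulVec] at this ⊢
    rw [sub_smul, sub_add_eq_add_sub, this, sub_self]

end SpectralRounding

open SpectralRounding

/-- **Two-sided spectral rounding without cost (Corollary of Kyng–Luh–Song).**
If `∑ xᵢ vᵢ vᵢᵀ = Iₙ` with `x ∈ [0,1]^m` and `‖vᵢ‖ ≤ ε ≤ 1` for all `i`, then there is a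
subset `S ⊆ [m]` with `(1 - 8ε) Iₙ ⪯ ∑_{i ∈ S} vᵢ vᵢᵀ ⪯ (1 + 8ε) Iₙ`. -/
theorem two_sided_spectral_rounding_subset {n m : ℕ} (v : Fin m → Fin n → ℝ)
    (x : Fin m → ℝ) (ε : ℝ)
    (hx : ∀ i, 0 ≤ x i ∧ x i ≤ 1)
    (hsum : (∑ i, x i • vecMulVec (v i) (v i)) = (1 : Matrix (Fin n) (Fin n) ℝ))
    (hv : ∀ i, Real.sqrt (∑ j, v i j ^ 2) ≤ ε)
    (hε : ε ≤ 1) :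
    ∃ S : Finset (Fin m),
      ((∑ i ∈ S, vecMulVec (v i) (v i)) - (1 - 8*ε) • (1 : Matrix (Fin n) (Fin n) ℝ)).PosSemidef ∧
      ((1 + 8*ε) • (1 : Matrix (Fin n) (Fin n) ℝ) - ∑ i ∈ S, vecMulVec (v i) (v i)).PosSemidef := by
  rcases Nat.eq_zero_or_pos n with rfl | hn
  · refine ⟨∅, ?_, ?_⟩
    · convert Matrix.PosSemidef.zero using 1
      exact Subsingleton.elim _ _
    · convert Matrix.PosSemidef.zero using 1
      exact Subsingleton.elim _ _
  have hvv : ∀ i, v i ⬝ᵥ v i = ∑ j, v i j ^ 2 := fun i => by simp [dotProduct, sq]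
  -- For `ε ≤ 0` all `vᵢ` vanish, and they cannot resolve the identity in positive dimension.
  have hεpos : 0 < ε := by
    by_contra hneg
    push Not at hneg
    have hv0 : ∀ i, v i = 0 := by
      intro i
      have h1 : Real.sqrt (∑ j, v i j ^ 2) = 0 :=
        le_antisymm ((hv i).trans hneg) (Real.sqrt_nonneg _)
      rw [Real.sqrt_eq_zero (Finset.sum_nonneg fun j _ => sq_nonneg _), ← hvv] at h1
      exact dotProduct_self_eq_zero.1 h1
    have := congrFun (congrFun hsum ⟨0, hn⟩) ⟨0, hn⟩
    simp [hv0] at this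
  have hv2 : ∀ i, v i ⬝ᵥ v i ≤ ε ^ 2 := by
    intro i
    rw [hvv]
    exact (Real.sqrt_le_left hεpos.le).1 (hv i)
  have hA0 : (0 : Matrix (Fin n) (Fin n) ℝ).IsSymm := Matrix.isSymm_zero
  have hnd : (Finset.univ : Finset (Fin m)).toList.Nodup := Finset.nodup_toList _
  have hstart : ∀ z, 8 * ε ≤ z →
      0 < (Z (TL x (Finset.univ : Finset (Fin m)).toList (pair v 0))).eval z := by
    intro z hz
    have hb := barrier_TL hx (by positivity) _ hnd (stable_pair v hA0) (degTwo_pair v 0)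
      (barrier_init v hεpos hsum hv2 hz)
    rw [eval_Z]
    refine (hb _ ⟨by simp, fun i => ?_⟩).1
    simp
  obtain ⟨S, -, hS⟩ := exists_rounding v hx _ hnd hA0 hstart
  rw [Finset.toList_toFinset, hsum, zero_add] at hS
  refine ⟨S, ?_⟩
  set W := ∑ i ∈ S, vecMulVec (v i) (v i) with hW
  have hWs : W.IsSymm := by
    rw [Matrix.IsSymm, hW, transpose_sum]
    exact Finset.sum_congr rfl fun i _ => isSymm_vecMulVec (v i)
  have hBs : (W - 1).IsSymm := hWs.sub Matrix.isSymm_one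
  have hdet : ∀ z, 8 * ε ≤ z → (z • (1 : Matrix (Fin n) (Fin n) ℝ) + (W - 1)).det ≠ 0 ∧
      (z • (1 : Matrix (Fin n) (Fin n) ℝ) + -(W - 1)).det ≠ 0 := by
    intro z hz
    have h1 := (hS z hz).ne'
    have h2 : ∀ B : Matrix (Fin n) (Fin n) ℝ, (Z (pencilDet v B)).eval z =
        (z • (1 : Matrix (Fin n) (Fin n) ℝ) + B).det := by
      intro B
      rw [Z_pencilDet, Matrix.eval_charpoly, sub_neg_eq_add, smul_one_eq_diagonal]
      rfl
    rw [pair, map_mul, Polynomial.eval_mul, h2, h2] at h1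
    exact ⟨left_ne_zero_of_mul h1, right_ne_zero_of_mul h1⟩
  constructor
  · convert posSemidef_of_det hBs (fun z hz => (hdet z hz).1) using 1
    module
  · convert posSemidef_of_det hBs.neg (fun z hz => (hdet z hz).2) using 1
    module
end

section
/- Let v_1, …, v_m ∈ ℝ^n, x ∈ [0,1]^m, and c ∈ ℝ_+^m with ⟨c, x⟩ > 0, and let λ > 0 and l ≥ 0. Suppose ‖Σ_{i=1}^m x_i v_i v_iᵀ‖_op ≤ λ and ‖v_i‖ ≤ l for all i ∈ [m]. Then there exists a choice of signs s_1, …, s_m ∈ {−1, +1} such that, defining u_i ∈ ℝ^{n+1} to be the vector whose first n coordinates equal v_i and whose last coordinate equals s_i·√(c_i·λ/⟨c, x⟩), one has ‖Σ_{i=1}^m x_i u_i u_iᵀ‖_op ≤ λ + l·√λ. -/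
/-!
In block form, `∑ xᵢ uᵢ uᵢᵀ` has upper left block `∑ xᵢ vᵢ vᵢᵀ ⪯ λ I`, lower right entry
`∑ xᵢ aᵢ² = λ`, where `aᵢ = √(cᵢ λ / ⟨c, x⟩)`, and off-diagonal column `w = ∑ sᵢ xᵢ aᵢ vᵢ`.
For uniformly random signs `‖w‖²` has mean `∑ xᵢ² aᵢ² ‖vᵢ‖² ≤ l² ∑ xᵢ aᵢ² = l² λ`, so some choice
of signs has `‖w‖ ≤ l √λ` (`exists_signs`, by choosing the signs greedily). The off-diagonal
part then contributes at most `2 |τ| ‖w‖ ‖z‖ ≤ l √λ (‖z‖² + τ²)` to the quadratic form at `(z, τ)`.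
Since the matrix is positive semidefinite, only this upper bound on the quadratic form matters
(`opNormLE_iff`).
-/

open Matrix BigOperators

/-- For a real symmetric `n × n` matrix `M`, `OpNormLE M t` expresses that the operator
norm of `M` (the largest absolute value of an eigenvalue) is at most `t`, via the
equivalent positive-semidefinite sandwich `-t Iₙ ⪯ M ⪯ t Iₙ`. -/
def OpNormLE {n : ℕ} (M : Matrix (Fin n) (Fin n) ℝ) (t : ℝ) : Prop :=
  (t • (1 : Matrix (Fin n) (Fin n) ℝ) - M).PosSemidef ∧
  (M + t • (1 : Matrix (Fin n) (Fin n) ℝ)).PosSemidef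

open Finset in
/-- Signs may be chosen so that the squared norm of the signed sum is at most the sum of the
squared norms: add the vectors one at a time, with a nonpositive cross term each time. -/
lemma exists_signs {n : ℕ} : ∀ {m : ℕ} (p : Fin m → Fin n → ℝ),
    ∃ s : Fin m → ℝ, (∀ i, s i = 1 ∨ s i = -1) ∧
      ∑ j, (∑ i, s i * p i j) ^ 2 ≤ ∑ i, ∑ j, p i j ^ 2 := by
  intro m
  induction m with
  | zero => intro p; exact ⟨fun _ => 1, fun _ => Or.inl rfl, by simp⟩
  | succ m ih =>
    intro p
    obtain ⟨s, hs, hle⟩ := ih (fun i => p i.castSucc)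
    have key : ∃ e : ℝ, (e = 1 ∨ e = -1) ∧
        e * ∑ j, (∑ i, s i * p (Fin.castSucc i) j) * p (Fin.last m) j ≤ 0 := by
      rcases le_total (∑ j, (∑ i, s i * p (Fin.castSucc i) j) * p (Fin.last m) j) 0 with h | h
      · exact ⟨1, Or.inl rfl, by linarith⟩
      · exact ⟨-1, Or.inr rfl, by linarith⟩
    obtain ⟨e, he, hneg⟩ := key
    refine ⟨Fin.snoc s e, ?_, ?_⟩
    · intro i
      refine Fin.lastCases ?_ (fun i => ?_) i
      · simpa using he
      · simpa using hs i
    · have he2 : e ^ 2 = 1 := by rcases he with h | h <;> rw [h] <;> norm_num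
      simp only [Fin.sum_univ_castSucc (n := m), Fin.snoc_castSucc, Fin.snoc_last]
      have expand : ∑ j, (∑ i, s i * p (Fin.castSucc i) j + e * p (Fin.last m) j) ^ 2
          = ∑ j, (∑ i, s i * p (Fin.castSucc i) j) ^ 2
            + 2 * (e * ∑ j, (∑ i, s i * p (Fin.castSucc i) j) * p (Fin.last m) j)
            + ∑ j, p (Fin.last m) j ^ 2 := by
        rw [mul_sum, mul_sum, ← sum_add_distrib, ← sum_add_distrib]
        refine sum_congr rfl fun j _ => ?_
        linear_combination (p (Fin.last m) j) ^ 2 * he2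
      rw [expand]
      linarith

lemma quadForm_eq {n m : ℕ} (u : Fin m → Fin n → ℝ) (x : Fin m → ℝ) (y : Fin n → ℝ) :
    y ⬝ᵥ ((∑ i, x i • vecMulVec (u i) (u i)) *ᵥ y) = ∑ i, x i * (∑ j, u i j * y j) ^ 2 := by
  rw [Matrix.sum_mulVec, dotProduct_sum]
  refine Finset.sum_congr rfl fun i _ => ?_
  rw [smul_mulVec, vecMulVec_mulVec, dotProduct_smul, smul_eq_mul]
  have h : u i ⬝ᵥ y = ∑ j, u i j * y j := rfl
  rw [← h, sq]
  simp [dotProduct_comm y]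

lemma isHermitian_sum {n m : ℕ} (u : Fin m → Fin n → ℝ) (x : Fin m → ℝ) :
    (∑ i, x i • vecMulVec (u i) (u i)).IsHermitian := by
  ext a b
  simp [Matrix.sum_apply, vecMulVec_apply, mul_comm]

lemma isHermitian_smul_one {n : ℕ} (t : ℝ) :
    (t • (1 : Matrix (Fin n) (Fin n) ℝ)).IsHermitian := by
  simp [Matrix.IsHermitian]

/-- For a nonnegative combination of rank-one squares, an operator norm bound is an upper bound
on the quadratic form. -/
lemma opNormLE_iff {n m : ℕ} (u : Fin m → Fin n → ℝ) (x : Fin m → ℝ) (hx : ∀ i, 0 ≤ x i)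
    {t : ℝ} (ht : 0 ≤ t) :
    OpNormLE (∑ i, x i • vecMulVec (u i) (u i)) t ↔
      ∀ y : Fin n → ℝ, ∑ i, x i * (∑ j, u i j * y j) ^ 2 ≤ t * ∑ j, y j ^ 2 := by
  have hone : ∀ y : Fin n → ℝ,
      y ⬝ᵥ ((t • (1 : Matrix (Fin n) (Fin n) ℝ)) *ᵥ y) = t * ∑ j, y j ^ 2 := by
    intro y
    rw [smul_mulVec, one_mulVec, dotProduct_smul, smul_eq_mul]
    simp [dotProduct, sq]
  constructor
  · rintro ⟨h, -⟩ y
    have := h.dotProduct_mulVec_nonneg y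
    rw [star_trivial, sub_mulVec, dotProduct_sub, hone, quadForm_eq] at this
    linarith
  · intro h
    refine ⟨.of_dotProduct_mulVec_nonneg ((isHermitian_smul_one t).sub (isHermitian_sum u x)) ?_,
      .of_dotProduct_mulVec_nonneg ((isHermitian_sum u x).add (isHermitian_smul_one t)) ?_⟩
    · intro y
      rw [star_trivial, sub_mulVec, dotProduct_sub, hone, quadForm_eq]
      linarith [h y]
    · intro y
      rw [star_trivial, add_mulVec, dotProduct_add, hone, quadForm_eq]
      have h1 : 0 ≤ ∑ i, x i * (∑ j, u i j * y j) ^ 2 :=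
        Finset.sum_nonneg fun i _ => mul_nonneg (hx i) (sq_nonneg _)
      have h2 : 0 ≤ ∑ j, y j ^ 2 := Finset.sum_nonneg fun j _ => sq_nonneg _
      positivity

/-- **The signing trick.** If `‖∑ xᵢ vᵢ vᵢᵀ‖_op ≤ λ` and `‖vᵢ‖ ≤ l` for all `i`, and
`⟨c, x⟩ > 0`, then there are signs `sᵢ ∈ {±1}` such that, appending the coordinate
`sᵢ √(cᵢ λ / ⟨c, x⟩)` to `vᵢ` to form `uᵢ ∈ ℝ^{n+1}`, one has
`‖∑ xᵢ uᵢ uᵢᵀ‖_op ≤ λ + l √λ`. -/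
theorem signing_trick {n m : ℕ} (v : Fin m → Fin n → ℝ) (x c : Fin m → ℝ) (lam l : ℝ)
    (hx : ∀ i, 0 ≤ x i ∧ x i ≤ 1)
    (hc : ∀ i, 0 ≤ c i)
    (hcx : 0 < ∑ i, c i * x i)
    (hlam : 0 < lam) (hl : 0 ≤ l)
    (hop : OpNormLE (∑ i, x i • vecMulVec (v i) (v i)) lam)
    (hv : ∀ i, Real.sqrt (∑ j, v i j ^ 2) ≤ l) :
    ∃ s : Fin m → ℝ, (∀ i, s i = 1 ∨ s i = -1) ∧
      OpNormLE
        (∑ i, x i • vecMulVec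
          (Fin.snoc (v i) (s i * Real.sqrt (c i * lam / ∑ j, c j * x j)))
          (Fin.snoc (v i) (s i * Real.sqrt (c i * lam / ∑ j, c j * x j))))
        (lam + l * Real.sqrt lam) := by
  obtain ⟨a, ha⟩ : ∃ a : Fin m → ℝ, ∀ i, Real.sqrt (c i * lam / ∑ j, c j * x j) = a i :=
    ⟨_, fun _ => rfl⟩
  have ha2 : ∀ i, a i ^ 2 = c i * lam / ∑ j, c j * x j := fun i => by
    rw [← ha, Real.sq_sqrt (div_nonneg (mul_nonneg (hc i) hlam.le) hcx.le)]
  have hsum : ∑ i, x i * a i ^ 2 = lam := by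
    have : ∀ i, x i * a i ^ 2 = (c i * x i) * (lam / ∑ j, c j * x j) := fun i => by
      rw [ha2]; ring
    rw [Finset.sum_congr rfl fun i _ => this i, ← Finset.sum_mul]
    field_simp
  have hv2 : ∀ i, ∑ j, v i j ^ 2 ≤ l ^ 2 := fun i => (Real.sqrt_le_left hl).1 (hv i)
  have hx0 : ∀ i, 0 ≤ x i := fun i => (hx i).1
  have hK : 0 ≤ l * Real.sqrt lam := mul_nonneg hl (Real.sqrt_nonneg _)
  have hK2 : (l * Real.sqrt lam) ^ 2 = l ^ 2 * lam := by
    rw [mul_pow, Real.sq_sqrt hlam.le]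
  obtain ⟨s, hs, hw⟩ := exists_signs (fun i j => x i * a i * v i j)
  have hw2 : ∑ j, (∑ i, s i * (x i * a i * v i j)) ^ 2 ≤ l ^ 2 * lam := by
    refine hw.trans ?_
    rw [← hsum, Finset.mul_sum]
    refine Finset.sum_le_sum fun i _ => ?_
    simp only [mul_pow, ← Finset.mul_sum]
    have h1 : x i ^ 2 ≤ x i := by nlinarith [hx i]
    calc x i ^ 2 * a i ^ 2 * ∑ j, v i j ^ 2 ≤ x i * a i ^ 2 * l ^ 2 := by
          gcongr
          · exact mul_nonneg (hx0 i) (sq_nonneg _)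
          · exact hv2 i
      _ = _ := by ring
  refine ⟨s, hs, ?_⟩
  simp only [ha]
  rw [opNormLE_iff _ x hx0 (by positivity)] at hop ⊢
  intro y
  simp only [Fin.sum_univ_castSucc (n := n), Fin.snoc_castSucc, Fin.snoc_last]
  obtain ⟨z, hz⟩ : ∃ z : Fin n → ℝ, ∀ j, y (Fin.castSucc j) = z j := ⟨_, fun _ => rfl⟩
  simp only [hz]
  generalize y (Fin.last n) = τ
  have hM := hop z
  have hCS := Finset.sum_mul_sq_le_sq_mul_sq Finset.univ
    (fun j => ∑ i, s i * (x i * a i * v i j)) z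
  have expand : ∑ i, x i * (∑ j, v i j * z j + s i * a i * τ) ^ 2
      = ∑ i, x i * (∑ j, v i j * z j) ^ 2
        + 2 * τ * ∑ j, (∑ i, s i * (x i * a i * v i j)) * z j + τ ^ 2 * lam := by
    have hswap : ∑ j, (∑ i, s i * (x i * a i * v i j)) * z j
        = ∑ i, s i * x i * a i * ∑ j, v i j * z j := by
      simp only [Finset.sum_mul, Finset.mul_sum]
      rw [Finset.sum_comm]
      exact Finset.sum_congr rfl fun i _ => Finset.sum_congr rfl fun j _ => by ring
    rw [hswap, ← hsum, Finset.mul_sum, Finset.mul_sum, ← Finset.sum_add_distrib,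
      ← Finset.sum_add_distrib]
    refine Finset.sum_congr rfl fun i _ => ?_
    have hs2 : s i ^ 2 = 1 := by rcases hs i with h | h <;> rw [h] <;> norm_num
    linear_combination x i * a i ^ 2 * τ ^ 2 * hs2
  rw [expand]
  have hZ : 0 ≤ ∑ j, z j ^ 2 := Finset.sum_nonneg fun j _ => sq_nonneg _
  generalize ∑ j, (∑ i, s i * (x i * a i * v i j)) * z j = W at hCS ⊢
  generalize ∑ j, z j ^ 2 = Z at *
  have hW : W ^ 2 ≤ (l * Real.sqrt lam) ^ 2 * Z := by
    rw [hK2]; exact hCS.trans (mul_le_mul_of_nonneg_right hw2 hZ)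
  generalize l * Real.sqrt lam = K at *
  have hcross : 2 * τ * W ≤ K * (Z + τ ^ 2) := by
    -- AM-GM: `(2 τ W)² ≤ 4 τ² K² Z ≤ (K (Z + τ²))²`
    refine abs_le_of_sq_le_sq' ?_ (by positivity) |>.2
    have h1 := mul_le_mul_of_nonneg_left hW (sq_nonneg (2 * τ))
    have h2 := sq_nonneg (K * (Z - τ ^ 2))
    nlinarith
  linarith
end

section
/- Let (Ω, F, P) be a probability space and let (Y_t)_{t ≥ 0} be a sequence of real-valued random variables; set X_t := Y_t − Y_{t−1} for t ≥ 1 and let G_{t−1} denote the σ-algebra generated by Y_0, …, Y_{t−1}. Suppose there exist γ ∈ (0, 1/2], β_u ≥ 0, β_l ≥ 0, and σ > 0 such that for all t ≥ 1, almost surely: (1) |X_t| ≤ 1; (2) −γ·Y_{t−1} − β_l ≤ E[X_t | G_{t−1}] ≤ −γ·Y_{t−1} + β_u; (3) E[X_t² | G_{t−1}] ≤ γ·Y_{t−1} + σ; and (4) for every a ∈ [−1, 1], E[exp(a·Y_0)] ≤ exp(a²·σ/γ). Then for every η > 0 and every t ≥ 0: P[Y_t ≥ β_u/γ + η] ≤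 exp(−η² / (4(σ + β_u)/γ + 2η)) and P[Y_t ≤ −β_l/γ − η] ≤ exp(−η² / (4σ/γ + η)). -/
open MeasureTheory

/-!
The proof is an exponential-moment argument. Since `exp x ≤ 1 + x + x²` for `|x| ≤ 1` and
`1 + x ≤ exp x`, the drift and second-moment hypotheses give, for `|a| ≤ 1`, a bound
`E[exp (a Y_{t+1})] ≤ exp q * E[exp ((a + p) Y_t)]`, where `p Y_t + q` dominates
`a E[X | G_t] + a² E[X² | G_t]` (`integral_exp_step`). For both tails the new parameter `a + p` is
no farther from `0` than `a`, so the bound can be iterated down to `Y_0`: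

* lower tail, `a = -l`: `p = γ l + γ l²`, and `E[exp (-l Y_t)] ≤ exp (l βl/γ + l² σ/γ)` for
  `l ∈ [0, 1]` is preserved because `(1 - γ - γ l)² + γ ≤ 1`;
* upper tail, `a = l`: `p = -γ l + γ l²`, and `E[exp (l Y_t)] ≤ exp (l βu/γ + A l²)` for
  `l ∈ [0, l₀]`, with `A = ((σ + βu)/γ) / (1 - l₀)`, is preserved because each step
  multiplies the parameter by a factor in `[0, 1 - γ (1 - l₀)]`.

Chernoff's bound concludes: with `S = (σ + βu)/γ` and `l = l₀ = η / (2 S + η)` the upper exponent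
is exactly `-η² / (4 S + 2 η)`; with `s = σ/γ` the choice `l = min (η / (2 s)) 1` handles the lower
tail.
-/

/-- One step of the exponential-moment recursion: adding the bounded increment `X` to `W` costs a
factor `exp q` and a change of parameter from `a` to `a + p`. -/
lemma integral_exp_step {Ω : Type*} {m m0 : MeasurableSpace Ω} (hm : m ≤ m0)
    (μ : Measure Ω) [IsProbabilityMeasure μ] (W X : Ω → ℝ)
    (hW : Measurable[m] W) (hX : Measurable X) (hb : ∀ᵐ ω ∂μ, |X ω| ≤ 1)
    (a p q : ℝ) (ha : |a| ≤ 1)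
    (hia : Integrable (fun ω => Real.exp (a * W ω)) μ)
    (hip : Integrable (fun ω => Real.exp ((a + p) * W ω)) μ)
    (hc : ∀ᵐ ω ∂μ, a * (μ[X | m]) ω + a ^ 2 * (μ[fun ω' => X ω' ^ 2 | m]) ω ≤ p * W ω + q) :
    Integrable (fun ω => Real.exp (a * (W ω + X ω))) μ ∧
    ∫ ω, Real.exp (a * (W ω + X ω)) ∂μ ≤ Real.exp q * ∫ ω, Real.exp ((a + p) * W ω) ∂μ := by
  have hW0 : Measurable W := hW.mono hm le_rfl
  have hXi : Integrable X μ := Integrable.of_bound hX.aestronglyMeasurable 1 (by simpa using hb)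
  have hX2i : Integrable (fun ω => X ω ^ 2) μ := by
    refine Integrable.of_bound (hX.pow_const 2).aestronglyMeasurable 1 ?_
    filter_upwards [hb] with ω hω
    simpa using hω
  have hax : ∀ᵐ ω ∂μ, |a * X ω| ≤ 1 := by
    filter_upwards [hb] with ω hω
    rw [abs_mul]
    exact mul_le_one₀ ha (abs_nonneg _) hω
  let Z : Ω → ℝ := (fun _ => (1 : ℝ)) + (a • X + (a ^ 2) • (fun ω => X ω ^ 2))
  have hZm : Measurable Z := by
    simp only [Z]
    fun_prop
  have hZi : Integrable Z μ :=
    (integrable_const 1).add ((hXi.smul a).add (hX2i.smul (a ^ 2)))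
  have hZval : ∀ ω, Z ω = 1 + a * X ω + (a * X ω) ^ 2 := by
    intro ω
    simp [Z]
    ring
  have hexpZ : ∀ᵐ ω ∂μ, Real.exp (a * X ω) ≤ Z ω := by
    filter_upwards [hax] with ω hω
    have := (abs_le.1 (Real.abs_exp_sub_one_sub_id_le hω)).2
    rw [hZval]
    linarith
  have hint : Integrable (fun ω => Real.exp (a * (W ω + X ω))) μ := by
    refine (hia.const_mul (Real.exp 1)).mono' (by fun_prop) ?_
    filter_upwards [hax] with ω hω
    rw [Real.norm_eq_abs, abs_of_pos (Real.exp_pos _), ← Real.exp_add, Real.exp_le_exp]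
    have := (abs_le.1 hω).2
    nlinarith
  refine ⟨hint, ?_⟩
  have hprod : Integrable ((fun ω => Real.exp (a * W ω)) * Z) μ := by
    refine (hia.const_mul 3).mono' ?_ ?_
    · exact (Measurable.mul (by fun_prop) hZm).aestronglyMeasurable
    · filter_upwards [hax] with ω hω
      have h1 := abs_le.1 hω
      have h2 : (a * X ω) ^ 2 ≤ 1 := by nlinarith
      have hZ3 : |Z ω| ≤ 3 := by
        rw [hZval, abs_le]
        constructor <;> nlinarith [sq_nonneg (a * X ω)]
      rw [Pi.mul_apply, norm_mul, Real.norm_eq_abs, Real.norm_eq_abs,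
        abs_of_pos (Real.exp_pos _), mul_comm]
      exact mul_le_mul_of_nonneg_right hZ3 (Real.exp_pos _).le
  have hEm : StronglyMeasurable[m] (fun ω => Real.exp (a * W ω)) :=
    (Real.measurable_exp.comp (hW.const_mul a)).stronglyMeasurable
  have hpull := condExp_mul_of_stronglyMeasurable_left hEm hprod hZi
  have hZc : μ[Z | m] =ᵐ[μ] fun ω =>
      1 + (a * (μ[X | m]) ω + a ^ 2 * (μ[fun ω' => X ω' ^ 2 | m]) ω) := by
    have e1 := condExp_add (integrable_const (μ := μ) (1 : ℝ))
      ((hXi.smul a).add (hX2i.smul (a ^ 2))) m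
    have e2 := condExp_add (hXi.smul a) (hX2i.smul (a ^ 2)) m
    have e3 := condExp_smul (μ := μ) a X m
    have e4 := condExp_smul (μ := μ) (a ^ 2) (fun ω => X ω ^ 2) m
    filter_upwards [e1, e2, e3, e4] with ω h1 h2 h3 h4
    rw [condExp_const hm] at h1
    simp only [Pi.add_apply, Pi.smul_apply, smul_eq_mul] at h1 h2 h3 h4
    rw [h1, h2, h3, h4]
  calc ∫ ω, Real.exp (a * (W ω + X ω)) ∂μ
      ≤ ∫ ω, ((fun ω => Real.exp (a * W ω)) * Z) ω ∂μ := by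
        refine integral_mono_ae hint hprod ?_
        filter_upwards [hexpZ] with ω hω
        rw [mul_add, Real.exp_add]
        exact mul_le_mul_of_nonneg_left hω (Real.exp_pos _).le
    _ = ∫ ω, (μ[(fun ω => Real.exp (a * W ω)) * Z | m]) ω ∂μ := (integral_condExp hm).symm
    _ ≤ ∫ ω, Real.exp q * Real.exp ((a + p) * W ω) ∂μ := by
        refine integral_mono_ae integrable_condExp (hip.const_mul _) ?_
        filter_upwards [hpull, hZc, hc] with ω h1 h2 h3
        rw [h1, Pi.mul_apply, h2]
        have h4 := Real.add_one_le_exp (p * W ω + q)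
        calc Real.exp (a * W ω) * _ ≤ Real.exp (a * W ω) * Real.exp (p * W ω + q) :=
              mul_le_mul_of_nonneg_left (by linarith) (Real.exp_pos _).le
          _ = _ := by
              rw [← Real.exp_add, ← Real.exp_add]
              ring_nf
    _ = _ := integral_const_mul _ _

/-- The exponent chosen in Chernoff's bound for the lower tail, with `s = σ/γ`. -/
lemma exists_lower_exponent (s η : ℝ) (hs : 0 < s) (hη : 0 < η) :
    ∃ l : ℝ, 0 ≤ l ∧ l ≤ 1 ∧ -l * η + l ^ 2 * s ≤ -η ^ 2 / (4 * s + η) := by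
  rcases le_total η (2 * s) with h | h
  · refine ⟨η / (2 * s), by positivity, by rwa [div_le_one (by positivity)], ?_⟩
    have e : -(η / (2 * s)) * η + (η / (2 * s)) ^ 2 * s = -(η ^ 2 / (4 * s)) := by
      field_simp
      ring
    rw [e, neg_div]
    gcongr
    linarith
  · refine ⟨1, zero_le_one, le_rfl, ?_⟩
    rw [le_div_iff₀ (by positivity)]
    nlinarith

/-- **Concentration inequality for self-adjusting processes (Theorem 2.8).**
Let `(Y_t)` be real random variables with difference sequence `X_t := Y_t - Y_{t-1}` and
`G_{t-1} := σ(Y_0, …, Y_{t-1})`. Suppose for some `γ ∈ (0, 1/2]`, `β_u, β_l ≥ 0`, `σ > 0`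
that a.s. for all `t ≥ 1`: `|X_t| ≤ 1`;
`-γ Y_{t-1} - β_l ≤ E[X_t | G_{t-1}] ≤ -γ Y_{t-1} + β_u`;
`E[X_t² | G_{t-1}] ≤ γ Y_{t-1} + σ`; and `E[exp(a Y_0)] ≤ exp(a² σ/γ)` for `a ∈ [-1, 1]`.
Then for every `η > 0` and `t ≥ 0`,
`P[Y_t ≥ β_u/γ + η] ≤ exp(-η² / (4(σ+β_u)/γ + 2η))` and
`P[Y_t ≤ -β_l/γ - η] ≤ exp(-η² / (4σ/γ + η))`. -/
theorem self_adjusting_concentration {Ω : Type*} [MeasurableSpace Ω]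
    (μ : Measure Ω) [IsProbabilityMeasure μ]
    (Y : ℕ → Ω → ℝ) (hYmeas : ∀ t, Measurable (Y t))
    (γ βu βl σ : ℝ) (hγ0 : 0 < γ) (hγ : γ ≤ 1/2) (hβu : 0 ≤ βu) (hβl : 0 ≤ βl) (hσ : 0 < σ)
    (G : ℕ → MeasurableSpace Ω)
    (hG : ∀ t, G t = ⨆ s ∈ Finset.range (t + 1),
      MeasurableSpace.comap (Y s) (inferInstance : MeasurableSpace ℝ))
    (hbdd : ∀ t : ℕ, 1 ≤ t → ∀ᵐ ω ∂μ, |Y t ω - Y (t - 1) ω| ≤ 1)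
    (hdrift : ∀ t : ℕ, 1 ≤ t → ∀ᵐ ω ∂μ,
      -γ * Y (t - 1) ω - βl ≤ (μ[fun ω' => Y t ω' - Y (t - 1) ω' | G (t - 1)]) ω ∧
      (μ[fun ω' => Y t ω' - Y (t - 1) ω' | G (t - 1)]) ω ≤ -γ * Y (t - 1) ω + βu)
    (hvar : ∀ t : ℕ, 1 ≤ t → ∀ᵐ ω ∂μ,
      (μ[fun ω' => (Y t ω' - Y (t - 1) ω') ^ 2 | G (t - 1)]) ω ≤ γ * Y (t - 1) ω + σ)
    (hinit : ∀ a : ℝ, -1 ≤ a → a ≤ 1 →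
      Integrable (fun ω => Real.exp (a * Y 0 ω)) μ ∧
      ∫ ω, Real.exp (a * Y 0 ω) ∂μ ≤ Real.exp (a^2 * σ / γ)) :
    ∀ η : ℝ, 0 < η → ∀ t : ℕ,
      μ {ω | βu / γ + η ≤ Y t ω} ≤
        ENNReal.ofReal (Real.exp (-η^2 / (4 * (σ + βu) / γ + 2 * η))) ∧
      μ {ω | Y t ω ≤ -(βl / γ) - η} ≤
        ENNReal.ofReal (Real.exp (-η^2 / (4 * σ / γ + η))) := by
  have hGle : ∀ t, G t ≤ ‹MeasurableSpace Ω› := by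
    intro t
    rw [hG]
    exact iSup₂_le fun s _ => (hYmeas s).comap_le
  have hYG : ∀ t, Measurable[G t] (Y t) := by
    intro t
    rw [hG, measurable_iff_comap_le]
    exact le_iSup₂_of_le t (by simp) le_rfl
  have hint : ∀ t : ℕ, ∀ a : ℝ, |a| ≤ 1 → Integrable (fun ω => Real.exp (a * Y t ω)) μ := by
    intro t
    induction t with
    | zero => exact fun a ha => (hinit a (abs_le.1 ha).1 (abs_le.1 ha).2).1
    | succ t ih =>
      intro a ha
      have hm : Measurable (Y (t + 1)) := hYmeas _
      refine ((ih a ha).const_mul (Real.exp 1)).mono' (by fun_prop) ?_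
      filter_upwards [hbdd (t + 1) (by omega)] with ω hω
      rw [Nat.add_sub_cancel] at hω
      rw [Real.norm_eq_abs, abs_of_pos (Real.exp_pos _), ← Real.exp_add, Real.exp_le_exp]
      have h1 : |a * (Y (t + 1) ω - Y t ω)| ≤ 1 := by
        rw [abs_mul]
        exact mul_le_one₀ ha (abs_nonneg _) hω
      have := (abs_le.1 h1).2
      linarith
  have hstep : ∀ t : ℕ, ∀ a p q : ℝ, |a| ≤ 1 → |a + p| ≤ 1 →
      (∀ y e v : ℝ, -γ * y - βl ≤ e → e ≤ -γ * y + βu → v ≤ γ * y + σ →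
        a * e + a ^ 2 * v ≤ p * y + q) →
      ∫ ω, Real.exp (a * Y (t + 1) ω) ∂μ
        ≤ Real.exp q * ∫ ω, Real.exp ((a + p) * Y t ω) ∂μ := by
    intro t a p q ha hap hc
    have h := (integral_exp_step (hGle t) μ (Y t) (fun ω => Y (t + 1) ω - Y t ω) (hYG t)
      ((hYmeas _).sub (hYmeas _)) (hbdd (t + 1) (by omega)) a p q ha (hint t a ha)
      (hint t _ hap) ?_).2
    · simpa using h
    · have h1 := hdrift (t + 1) (by omega)
      have h2 := hvar (t + 1) (by omega)
      rw [Nat.add_sub_cancel] at h1 h2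
      filter_upwards [h1, h2] with ω h1 h2
      exact hc _ _ _ h1.1 h1.2 h2
  have hlow : ∀ t : ℕ, ∀ l : ℝ, 0 ≤ l → l ≤ 1 →
      ∫ ω, Real.exp (-l * Y t ω) ∂μ ≤ Real.exp (l * (βl / γ) + l ^ 2 * (σ / γ)) := by
    intro t
    induction t with
    | zero =>
      intro l h0 h1
      refine (hinit (-l) (by linarith) (by linarith)).2.trans (Real.exp_le_exp.2 ?_)
      have : 0 ≤ l * (βl / γ) := by positivity
      rw [neg_sq, mul_div_assoc]
      linarith
    | succ t ih =>
      intro l h0 h1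
      have hγl : γ * l ≤ γ := by nlinarith
      have hγl0 : 0 ≤ γ * l := by positivity
      -- the next parameter is `-l * r`
      obtain ⟨r, hr⟩ : ∃ r, r = 1 - γ - γ * l := ⟨_, rfl⟩
      have hr0 : 0 ≤ r := by linarith
      have hr1 : r ≤ 1 - γ := by linarith
      have hlr0 : 0 ≤ l * r := by positivity
      have hlr1 : l * r ≤ 1 := by nlinarith
      have e : -l + (γ * l + γ * l ^ 2) = -(l * r) := by rw [hr]; ring
      have h := hstep t (-l) (γ * l + γ * l ^ 2) (l * βl + l ^ 2 * σ)
        (by rw [abs_neg, abs_of_nonneg h0]; exact h1)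
        (by rw [e, abs_neg, abs_of_nonneg hlr0]; exact hlr1)
        (fun y e v he _ hv => by
          have := mul_le_mul_of_nonneg_left he h0
          have := mul_le_mul_of_nonneg_left hv (sq_nonneg l)
          linarith)
      rw [e] at h
      refine h.trans ((mul_le_mul_of_nonneg_left (ih _ hlr0 hlr1) (Real.exp_pos _).le).trans ?_)
      rw [← Real.exp_add, Real.exp_le_exp]
      have eβ : βl = γ * (βl / γ) := by field_simp
      have eσ : σ = γ * (σ / γ) := by field_simp
      have hB : 0 ≤ βl / γ := by positivity
      have hS : 0 ≤ σ / γ := by positivity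
      have k1 : l * βl + l * r * (βl / γ) ≤ l * (βl / γ) := by
        have : 0 ≤ l * (βl / γ) * (1 - γ - r) := mul_nonneg (by positivity) (by linarith)
        nlinarith
      have k2 : l ^ 2 * σ + (l * r) ^ 2 * (σ / γ) ≤ l ^ 2 * (σ / γ) := by
        have : 0 ≤ l ^ 2 * (σ / γ) * (1 - γ - r ^ 2) := mul_nonneg (by positivity) (by nlinarith)
        nlinarith
      linarith
  have hup : ∀ l₀ : ℝ, l₀ < 1 → ∀ t : ℕ, ∀ l : ℝ, 0 ≤ l → l ≤ l₀ →
      ∫ ω, Real.exp (l * Y t ω) ∂μ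
        ≤ Real.exp (l * (βu / γ) + l ^ 2 * ((σ + βu) / γ / (1 - l₀))) := by
    intro l₀ hl₀ t
    have hd : 0 < 1 - l₀ := by linarith
    obtain ⟨A, hA⟩ : ∃ A, A = (σ + βu) / γ / (1 - l₀) := ⟨_, rfl⟩
    have hA0 : 0 ≤ A := by rw [hA]; positivity
    have hAeq : σ + βu = A * γ * (1 - l₀) := by rw [hA]; field_simp
    rw [← hA]
    induction t with
    | zero =>
      intro l h0 h1
      refine (hinit l (by linarith) (by linarith)).2.trans (Real.exp_le_exp.2 ?_)
      have k1 : 0 ≤ l * (βu / γ) := by positivity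
      have k2 : σ / γ ≤ A := by
        rw [div_le_iff₀ hγ0]
        nlinarith [mul_nonneg (mul_nonneg hA0 hγ0.le) (h0.trans h1)]
      have := mul_le_mul_of_nonneg_left k2 (sq_nonneg l)
      rw [mul_div_assoc]
      linarith
    | succ t ih =>
      intro l h0 h1
      have hl₀0 : 0 ≤ l₀ := h0.trans h1
      -- the next parameter is `l * r`
      obtain ⟨r, hr⟩ : ∃ r, r = 1 - γ + γ * l := ⟨_, rfl⟩
      have hγl0 : 0 ≤ γ * l := by positivity
      have hr0 : 0 ≤ r := by linarith
      have hr1 : r ≤ 1 - γ * (1 - l₀) := by nlinarith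
      have hr2 : r ≤ 1 := hr1.trans (by nlinarith)
      have hlr0 : 0 ≤ l * r := by positivity
      have hlr1 : l * r ≤ l₀ := by nlinarith
      have e : l + (-γ * l + γ * l ^ 2) = l * r := by rw [hr]; ring
      have h := hstep t l (-γ * l + γ * l ^ 2) (l * βu + l ^ 2 * σ)
        (by rw [abs_of_nonneg h0]; linarith)
        (by rw [e, abs_of_nonneg hlr0]; linarith)
        (fun y e v _ he hv => by
          have := mul_le_mul_of_nonneg_left he h0
          have := mul_le_mul_of_nonneg_left hv (sq_nonneg l)
          linarith)
      rw [e] at h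
      refine h.trans ((mul_le_mul_of_nonneg_left (ih _ hlr0 hlr1) (Real.exp_pos _).le).trans ?_)
      rw [← Real.exp_add, Real.exp_le_exp]
      have k1 : l * βu + l * r * (βu / γ) = l * (βu / γ) + l ^ 2 * βu := by
        rw [hr]
        field_simp
        ring
      have k2 : l ^ 2 * (σ + βu) + (l * r) ^ 2 * A ≤ l ^ 2 * A := by
        have : 0 ≤ l ^ 2 * A * (1 - γ * (1 - l₀) - r ^ 2) :=
          mul_nonneg (by positivity) (by nlinarith)
        rw [hAeq]
        nlinarith
      linarith
  intro η hη t
  constructor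
  · obtain ⟨S, hS⟩ : ∃ S, S = (σ + βu) / γ := ⟨_, rfl⟩
    have hS0 : 0 < S := by rw [hS]; positivity
    have hl1 : η / (2 * S + η) < 1 := by
      rw [div_lt_one (by positivity)]
      linarith
    have hl0 : 0 ≤ η / (2 * S + η) := by positivity
    obtain ⟨l, hl⟩ : ∃ l, l = η / (2 * S + η) := ⟨_, rfl⟩
    rw [← hl] at hl1 hl0
    have hM := hup l hl1 t l hl0 le_rfl
    have hC := ProbabilityTheory.measure_ge_le_exp_mul_mgf (μ := μ) (X := Y t) (t := l)
      (βu / γ + η) hl0 (hint t l (by rw [abs_of_nonneg hl0]; exact hl1.le))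
    rw [← ofReal_measureReal]
    refine ENNReal.ofReal_le_ofReal
      (hC.trans ((mul_le_mul_of_nonneg_left hM (Real.exp_pos _).le).trans ?_))
    rw [← Real.exp_add, Real.exp_le_exp, mul_div_assoc, ← hS]
    refine le_of_eq ?_
    have hd : 1 - l = 2 * S / (2 * S + η) := by
      rw [hl]
      field_simp
      ring
    have : -l * (βu / γ + η) + (l * (βu / γ) + l ^ 2 * (S / (1 - l)))
        = -l * η + l ^ 2 * (S / (1 - l)) := by ring
    rw [this, hd, hl]
    field_simp
    ring
  · obtain ⟨l, hl0, hl1, hl⟩ := exists_lower_exponent (σ / γ) η (by positivity) hη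
    have hM := hlow t l hl0 hl1
    have hC := ProbabilityTheory.measure_le_le_exp_mul_mgf (μ := μ) (X := Y t) (t := -l)
      (-(βl / γ) - η) (by linarith) (hint t (-l) (by rw [abs_neg, abs_of_nonneg hl0]; exact hl1))
    rw [← ofReal_measureReal]
    refine ENNReal.ofReal_le_ofReal
      (hC.trans ((mul_le_mul_of_nonneg_left hM (Real.exp_pos _).le).trans ?_))
    rw [← Real.exp_add, Real.exp_le_exp, mul_div_assoc]
    linarith
end

section
/- There exists n₀ ∈ ℕ such that the following holds for all n ≥ n₀. Let v_1, …, v_m ∈ ℝ^n and x ∈ [0,1]^m satisfy Σ_{i=1}^m x_i v_i v_iᵀ = I_n, let c ∈ ℝ_+^m, set C := ⟨c, x⟩, and let ε ∈ (0, 1/2]. If C ≥ 15·n·c_∞/ε², then there exists z ∈ {0,1}^m such that ⟨c, z⟩ ≤ C and Σ_{i=1}^m z_i v_i v_iᵀ ⪰ (1 − 4ε)·I_n. (Existential form of one-sided spectral rounding under a cost budget, used for weighted experimental design.) -/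
open Matrix BigOperators

/-!
The rounding is obtained from a minimizer of a barrier potential over subsets.

Put `K = c_∞`, `ℓ = 1 - 4ε`, `s = 1 - 2ε`, and for a set `S` of indices let
`M_S = ∑_{i ∈ S} vᵢ vᵢᵀ - ℓ I`. Among the sets with `M_S ≻ 0` (the full set is one of them, since
`∑ vᵢ vᵢᵀ ⪰ I`), choose `S` minimizing `2 K tr(M_S⁻¹) + c(S)`, and write `M = M_S`,
`aᵢ = vᵢᵀ M⁻¹ vᵢ`, `bᵢ = vᵢᵀ M⁻² vᵢ`. By the Sherman–Morrison formula, minimality under deleting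
`i ∈ S` gives `cᵢ (1 - aᵢ) ≤ 2 K bᵢ`, and minimality under inserting `j ∉ S` gives
`2 K bⱼ ≤ cⱼ (1 + aⱼ)`. Summing these with weights `1 - s xᵢ` and `s xⱼ`, and using `cᵢ ≤ K`,
`c(S) - s C ≤ 2 K tr(M⁻² (Z - s I)) + K tr(M⁻¹ (Z + s I))`, where `Z = M + ℓ I`. The right side is
at most `K (4 tr M⁻¹ - 4 ε tr M⁻² + n) ≤ K (n / ε + n)`, the last step being
`tr (M⁻¹ - (2ε)⁻¹ I)² ≥ 0`. The budget hypothesis bounds this by `2 ε C = (1 - s) C`, so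
`c(S) ≤ C`. The argument works in every dimension, so `n₀ = 0` suffices.
-/

section RankOne

variable {n : ℕ}

lemma dotProduct_symm_mulVec {Q : Matrix (Fin n) (Fin n) ℝ} (hQ : Qᵀ = Q) (u w : Fin n → ℝ) :
    u ⬝ᵥ (Q *ᵥ w) = (Q *ᵥ u) ⬝ᵥ w := by
  rw [dotProduct_mulVec, ← mulVec_transpose, hQ]

lemma posDef_transpose {M : Matrix (Fin n) (Fin n) ℝ} (hM : M.PosDef) : Mᵀ = M := by
  have h := hM.isHermitian.eq
  rwa [conjTranspose_eq_transpose_of_trivial] at h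

lemma posDef_mulVec_inv {M : Matrix (Fin n) (Fin n) ℝ} (hM : M.PosDef) (v : Fin n → ℝ) :
    M *ᵥ (M⁻¹ *ᵥ v) = v := by
  rw [mulVec_mulVec, Matrix.mul_nonsing_inv _ ((Matrix.isUnit_iff_isUnit_det _).1 hM.isUnit),
    one_mulVec]

lemma trace_mul_vecMulVec (Q : Matrix (Fin n) (Fin n) ℝ) (v : Fin n → ℝ) :
    (Q * vecMulVec v v).trace = v ⬝ᵥ (Q *ᵥ v) := by
  rw [mul_vecMulVec, trace_vecMulVec, dotProduct_comm]

lemma trace_mul_mul_vecMulVec {Q : Matrix (Fin n) (Fin n) ℝ} (hQ : Qᵀ = Q) (v : Fin n → ℝ) :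
    (Q * Q * vecMulVec v v).trace = (Q *ᵥ v) ⬝ᵥ (Q *ᵥ v) := by
  rw [trace_mul_vecMulVec, ← mulVec_mulVec, dotProduct_symm_mulVec hQ]

lemma posDef_add_rankOne {M : Matrix (Fin n) (Fin n) ℝ} (hM : M.PosDef) (v : Fin n → ℝ) :
    (M + vecMulVec v v).PosDef := by
  have h := posSemidef_vecMulVec_self_star v
  rw [star_trivial] at h
  exact hM.add_posSemidef h

/-- A rank-one downdate stays positive definite when `vᵀ M⁻¹ v < 1`. -/
lemma posDef_sub_rankOne {M : Matrix (Fin n) (Fin n) ℝ} (hM : M.PosDef) (v : Fin n → ℝ)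
    (ha : v ⬝ᵥ (M⁻¹ *ᵥ v) < 1) : (M - vecMulVec v v).PosDef := by
  have hMt := posDef_transpose hM
  refine PosDef.of_dotProduct_mulVec_pos ?_ ?_
  · rw [Matrix.IsHermitian, conjTranspose_eq_transpose_of_trivial, transpose_sub, hMt,
      transpose_vecMulVec]
  · intro y hy
    have hpos := hM.dotProduct_mulVec_pos hy
    rw [star_trivial] at hpos ⊢
    set w := M⁻¹ *ᵥ v with hw
    have hMw : M *ᵥ w = v := posDef_mulVec_inv hM v
    set p := v ⬝ᵥ y with hp
    -- Positivity of `M` at `y - p • w` is the quantitative form of Cauchy–Schwarz used here.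
    have h0 := hM.posSemidef.dotProduct_mulVec_nonneg (y - p • w)
    rw [star_trivial] at h0
    have e1 : w ⬝ᵥ (M *ᵥ y) = p := by rw [dotProduct_symm_mulVec hMt, hMw]
    have e2 : y ⬝ᵥ v = p := dotProduct_comm _ _
    have e3 : w ⬝ᵥ v = v ⬝ᵥ w := dotProduct_comm _ _
    have e4 : y ⬝ᵥ ((M - vecMulVec v v) *ᵥ y) = y ⬝ᵥ (M *ᵥ y) - p * p := by
      rw [sub_mulVec, dotProduct_sub, vecMulVec_mulVec]
      simp [e2, ← hp]
    rw [mulVec_sub, mulVec_smul, hMw, sub_dotProduct, dotProduct_sub, dotProduct_sub,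
      smul_dotProduct, smul_dotProduct, dotProduct_smul, dotProduct_smul, e1, e2, e3] at h0
    simp only [smul_eq_mul] at h0
    rw [e4]
    by_cases hp0 : p = 0
    · rw [hp0]; linarith
    · have : 0 < p * p := mul_self_pos.2 hp0
      nlinarith

/-- Trace form of the Sherman–Morrison formula; `t` is taken to be `1` or `-1` below. -/
lemma trace_inv_rankOne {M : Matrix (Fin n) (Fin n) ℝ} (hM : M.PosDef) (v : Fin n → ℝ) (t : ℝ)
    (ht : 1 + t * (v ⬝ᵥ (M⁻¹ *ᵥ v)) ≠ 0) :
    ((M + t • vecMulVec v v)⁻¹).trace = (M⁻¹).trace -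
      t * ((M⁻¹ *ᵥ v) ⬝ᵥ (M⁻¹ *ᵥ v)) / (1 + t * (v ⬝ᵥ (M⁻¹ *ᵥ v))) := by
  have hu := (Matrix.isUnit_iff_isUnit_det _).1 hM.isUnit
  have hQt : (M⁻¹)ᵀ = M⁻¹ := posDef_transpose hM.inv
  set w := M⁻¹ *ᵥ v with hw
  have hMw : M *ᵥ w = v := posDef_mulVec_inv hM v
  set a := v ⬝ᵥ w with ha
  have hvQ : v ᵥ* M⁻¹ = w := by rw [← mulVec_transpose, hQt]
  have key : (M + t • vecMulVec v v)⁻¹ = M⁻¹ - (t / (1 + t * a)) • vecMulVec w w := by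
    apply inv_eq_right_inv
    rw [add_mul, mul_sub, mul_sub, mul_nonsing_inv _ hu, smul_mul_assoc, smul_mul_assoc,
      mul_smul_comm, mul_smul_comm, mul_vecMulVec, hMw, vecMulVec_mul, hvQ,
      vecMulVec_mul_vecMulVec, ← ha]
    ext i j
    simp only [Matrix.add_apply, Matrix.sub_apply, Matrix.smul_apply, vecMulVec_apply,
      smul_eq_mul, Pi.smul_apply]
    field_simp
    ring
  rw [key, trace_sub, trace_smul, trace_vecMulVec, smul_eq_mul]
  ring

end RankOne

/-- The inequality `4 ε tr (M⁻¹ - (2ε)⁻¹ I)² ≥ 0`, expanded, with `Q` in place of `M⁻¹`. -/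
lemma four_trace_le {n : ℕ} {Q : Matrix (Fin n) (Fin n) ℝ} (hQ : Qᵀ = Q) {ε : ℝ} (hε : 0 < ε) :
    4 * Q.trace ≤ 4 * ε * (Q * Q).trace + n / ε := by
  have h := (posSemidef_conjTranspose_mul_self
    (Q - (1 / (2 * ε)) • (1 : Matrix (Fin n) (Fin n) ℝ))).trace_nonneg
  rw [conjTranspose_eq_transpose_of_trivial, transpose_sub, transpose_smul, transpose_one, hQ,
    sub_mul, mul_sub, mul_sub] at h
  simp only [smul_mul_assoc, mul_smul_comm, one_mul, mul_one, trace_sub, trace_smul, trace_one,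
    Fintype.card_fin, smul_eq_mul] at h
  have h2 := mul_nonneg (by positivity : (0 : ℝ) ≤ 4 * ε) h
  have e : 4 * ε * ((Q * Q).trace - 1 / (2 * ε) * Q.trace
      - (1 / (2 * ε) * Q.trace - 1 / (2 * ε) * (1 / (2 * ε) * n)))
      = 4 * ε * (Q * Q).trace + n / ε - 4 * Q.trace := by
    field_simp
    ring
  linarith

/-- The shifted Gram matrix `∑_{i ∈ S} vᵢ vᵢᵀ - ℓ I`. -/
def shiftedGram {n m : ℕ} (v : Fin m → Fin n → ℝ) (l : ℝ) (S : Finset (Fin m)) :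
    Matrix (Fin n) (Fin n) ℝ :=
  ∑ i ∈ S, vecMulVec (v i) (v i) - l • 1

/-- First-order optimality conditions at a minimizer of the barrier potential
`2 K tr(M_S⁻¹) + c(S)`, for deletions and for insertions. -/
lemma exists_local_opt {n m : ℕ} (v : Fin m → Fin n → ℝ) (c : Fin m → ℝ) (l K : ℝ)
    (hK : 0 ≤ K) (hfull : (shiftedGram v l Finset.univ).PosDef) :
    ∃ S : Finset (Fin m), (shiftedGram v l S).PosDef ∧
      (∀ i ∈ S, 0 ≤ c i → c i * (1 - v i ⬝ᵥ ((shiftedGram v l S)⁻¹ *ᵥ v i)) ≤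
        2 * K * (((shiftedGram v l S)⁻¹ *ᵥ v i) ⬝ᵥ ((shiftedGram v l S)⁻¹ *ᵥ v i))) ∧
      (∀ i ∉ S, 2 * K * (((shiftedGram v l S)⁻¹ *ᵥ v i) ⬝ᵥ ((shiftedGram v l S)⁻¹ *ᵥ v i)) ≤
        c i * (1 + v i ⬝ᵥ ((shiftedGram v l S)⁻¹ *ᵥ v i))) := by
  classical
  obtain ⟨S, hS, hmin⟩ := Finset.exists_min_image
    (Finset.univ.filter fun S : Finset (Fin m) => (shiftedGram v l S).PosDef)
    (fun S => 2 * K * ((shiftedGram v l S)⁻¹).trace + ∑ i ∈ S, c i)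
    ⟨Finset.univ, by simpa using hfull⟩
  simp only [Finset.mem_filter, Finset.mem_univ, true_and] at hS hmin
  refine ⟨S, hS, ?_, ?_⟩
  · intro i hi hci
    set M := shiftedGram v l S with hMdef
    have hb : 0 ≤ (M⁻¹ *ᵥ v i) ⬝ᵥ (M⁻¹ *ᵥ v i) := by
      simpa using dotProduct_star_self_nonneg (M⁻¹ *ᵥ v i)
    by_cases ha : v i ⬝ᵥ (M⁻¹ *ᵥ v i) < 1
    · have hE : shiftedGram v l (S.erase i) = M - vecMulVec (v i) (v i) := by
        rw [hMdef, shiftedGram, shiftedGram, ← Finset.add_sum_erase S _ hi]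
        abel
      have h := hmin (S.erase i) (by rw [hE]; exact posDef_sub_rankOne hS _ ha)
      have hpos : 0 < 1 - v i ⬝ᵥ (M⁻¹ *ᵥ v i) := by linarith
      have ht := trace_inv_rankOne hS (v i) (-1) (by linarith)
      rw [neg_one_smul, ← sub_eq_add_neg] at ht
      rw [hE, ht, ← Finset.add_sum_erase S c hi] at h
      have h3 : c i ≤ 2 * K * ((M⁻¹ *ᵥ v i) ⬝ᵥ (M⁻¹ *ᵥ v i)) / (1 - v i ⬝ᵥ (M⁻¹ *ᵥ v i)) := by
        have e : 1 + -1 * (v i ⬝ᵥ (M⁻¹ *ᵥ v i)) = 1 - v i ⬝ᵥ (M⁻¹ *ᵥ v i) := by ring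
        rw [e] at h
        rw [mul_div_assoc]
        rw [mul_div_assoc] at h
        linarith
      rwa [le_div_iff₀ hpos] at h3
    · have : 0 ≤ 2 * K * ((M⁻¹ *ᵥ v i) ⬝ᵥ (M⁻¹ *ᵥ v i)) := by positivity
      nlinarith
  · intro i hi
    set M := shiftedGram v l S with hMdef
    have ha : 0 ≤ v i ⬝ᵥ (M⁻¹ *ᵥ v i) := by
      simpa using hS.inv.posSemidef.dotProduct_mulVec_nonneg (v i)
    have hE : shiftedGram v l (insert i S) = M + vecMulVec (v i) (v i) := by
      rw [hMdef, shiftedGram, shiftedGram, Finset.sum_insert hi]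
      abel
    have h := hmin (insert i S) (by rw [hE]; exact posDef_add_rankOne hS _)
    have hpos : 0 < 1 + v i ⬝ᵥ (M⁻¹ *ᵥ v i) := by linarith
    have ht := trace_inv_rankOne hS (v i) 1 (by linarith)
    rw [one_smul, one_mul, one_mul] at ht
    rw [hE, ht, Finset.sum_insert hi] at h
    have h3 : 2 * K * ((M⁻¹ *ᵥ v i) ⬝ᵥ (M⁻¹ *ᵥ v i)) / (1 + v i ⬝ᵥ (M⁻¹ *ᵥ v i)) ≤ c i := by
      rw [mul_div_assoc]
      linarith
    rwa [div_le_iff₀ hpos] at h3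

/-- **One-sided spectral rounding under a cost budget (existential form).**
There exists `n₀` such that for all `n ≥ n₀`: given `v₁, …, v_m ∈ ℝⁿ` and `x ∈ [0,1]^m`
with `∑ xᵢ vᵢ vᵢᵀ = Iₙ`, nonnegative costs `c` with budget `C := ⟨c, x⟩`, and
`ε ∈ (0, 1/2]` with `C ≥ 15 n c_∞ / ε²`, there exists `z ∈ {0,1}^m` with `⟨c, z⟩ ≤ C`
and `∑ zᵢ vᵢ vᵢᵀ ⪰ (1 - 4ε) Iₙ`. -/
theorem one_sided_spectral_rounding_budget :
    ∃ n₀ : ℕ, ∀ n : ℕ, n₀ ≤ n →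
      ∀ (m : ℕ) (v : Fin m → Fin n → ℝ) (x c : Fin m → ℝ) (ε : ℝ),
        (∀ i, 0 ≤ x i ∧ x i ≤ 1) →
        (∑ i, x i • vecMulVec (v i) (v i)) = (1 : Matrix (Fin n) (Fin n) ℝ) →
        (∀ i, 0 ≤ c i) →
        0 < ε → ε ≤ 1/2 →
        15 * n * (⨆ i, c i) / ε^2 ≤ (∑ i, c i * x i) →
        ∃ z : Fin m → ℝ, (∀ i, z i = 0 ∨ z i = 1) ∧
          (∑ i, c i * z i) ≤ (∑ i, c i * x i) ∧
          ((∑ i, z i • vecMulVec (v i) (v i)) -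
            (1 - 4*ε) • (1 : Matrix (Fin n) (Fin n) ℝ)).PosSemidef := by
  classical
  refine ⟨0, fun n _ m v x c ε hx hI hc hε hε2 hC => ?_⟩
  set K := ⨆ i, c i with hKdef
  have hcK : ∀ i, c i ≤ K := fun i => le_ciSup (Set.finite_range c).bddAbove i
  have hK : 0 ≤ K := Real.iSup_nonneg hc
  set l := 1 - 4 * ε with hl
  have hfull : (shiftedGram v l Finset.univ).PosDef := by
    have e : shiftedGram v l Finset.univ =
        (4 * ε) • (1 : Matrix (Fin n) (Fin n) ℝ) +
          ∑ i, (1 - x i) • vecMulVec (v i) (v i) := by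
      simp only [sub_smul, Finset.sum_sub_distrib, one_smul, hI, shiftedGram, hl]
      abel
    rw [e]
    refine PosDef.add_posSemidef (PosDef.one.smul (by positivity)) (posSemidef_sum _ ?_)
    intro i _
    have h := posSemidef_vecMulVec_self_star (v i)
    rw [star_trivial] at h
    exact h.smul (by linarith [(hx i).2])
  obtain ⟨S, hS, hdel, hins⟩ := exists_local_opt v c l K hK hfull
  set z : Fin m → ℝ := fun i => if i ∈ S then 1 else 0 with hz
  have hZ : ∑ i, z i • vecMulVec (v i) (v i) - l • 1 = shiftedGram v l S := by
    simp [hz, shiftedGram, ite_smul]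
  refine ⟨z, fun i => ?_, ?_, ?_⟩
  · by_cases hi : i ∈ S <;> simp [hz, hi]
  swap
  · rw [hZ]; exact hS.posSemidef
  set M := shiftedGram v l S with hM
  set Q := M⁻¹ with hQ
  have hQt : Qᵀ = Q := posDef_transpose hS.inv
  have hQM : Q * M = 1 :=
    nonsing_inv_mul _ ((Matrix.isUnit_iff_isUnit_det _).1 hS.isUnit)
  set s := 1 - 2 * ε with hs
  have hs0 : 0 ≤ s := by linarith
  have hs1 : s ≤ 1 := by linarith
  have hterm : ∀ i, (z i - s * x i) * c i ≤
      2 * K * ((z i - s * x i) * (Q * Q * vecMulVec (v i) (v i)).trace) +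
        K * ((z i + s * x i) * (Q * vecMulVec (v i) (v i)).trace) := by
    intro i
    rw [trace_mul_mul_vecMulVec hQt, trace_mul_vecMulVec]
    have ha : 0 ≤ v i ⬝ᵥ (Q *ᵥ v i) := by
      simpa using hS.inv.posSemidef.dotProduct_mulVec_nonneg (v i)
    have hy0 : 0 ≤ s * x i := mul_nonneg hs0 (hx i).1
    have hy1 : s * x i ≤ 1 := mul_le_one₀ hs1 (hx i).1 (hx i).2
    have hca : c i * (v i ⬝ᵥ (Q *ᵥ v i)) ≤ K * (v i ⬝ᵥ (Q *ᵥ v i)) :=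
      mul_le_mul_of_nonneg_right (hcK i) ha
    have hKa : 0 ≤ K * (v i ⬝ᵥ (Q *ᵥ v i)) := mul_nonneg hK ha
    have hyKa := mul_nonneg hy0 hKa
    by_cases hi : i ∈ S
    · have h := hdel i hi (hc i)
      have hzi : z i = 1 := by simp [hz, hi]
      rw [hzi]
      have h2 := mul_le_mul_of_nonneg_left
        (by linarith : c i - 2 * K * ((Q *ᵥ v i) ⬝ᵥ (Q *ᵥ v i)) ≤ K * (v i ⬝ᵥ (Q *ᵥ v i)))
        (by linarith : 0 ≤ 1 - s * x i)
      linarith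
    · have h := hins i hi
      have hzi : z i = 0 := by simp [hz, hi]
      rw [hzi]
      have h2 := mul_le_mul_of_nonneg_left
        (by linarith : 2 * K * ((Q *ᵥ v i) ⬝ᵥ (Q *ᵥ v i)) ≤ c i + K * (v i ⬝ᵥ (Q *ᵥ v i))) hy0
      linarith
  have hsum := Finset.sum_le_sum fun i (_ : i ∈ Finset.univ) => hterm i
  have hZ' : ∑ i, z i • vecMulVec (v i) (v i) = M + l • 1 := by rw [← hZ]; abel
  -- For any `P`, the weighted sums of `tr (P vᵢ vᵢᵀ)` are traces against `M + ℓ I` and `I`.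
  have hPz : ∀ P : Matrix (Fin n) (Fin n) ℝ,
      ∑ i, z i * (P * vecMulVec (v i) (v i)).trace = (P * M).trace + l * P.trace := by
    intro P
    have := congrArg (fun A => (P * A).trace) hZ'
    simpa [Finset.mul_sum, trace_sum, mul_add] using this
  have hPx : ∀ P : Matrix (Fin n) (Fin n) ℝ,
      ∑ i, x i * (P * vecMulVec (v i) (v i)).trace = P.trace := by
    intro P
    have := congrArg (fun A => (P * A).trace) hI
    simpa [Finset.mul_sum, trace_sum] using this
  have hL : ∑ i, (z i - s * x i) * c i = ∑ i, c i * z i - s * ∑ i, c i * x i := by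
    rw [Finset.mul_sum, ← Finset.sum_sub_distrib]
    exact Finset.sum_congr rfl fun i _ => by ring
  have hR1 : ∑ i, (z i - s * x i) * (Q * Q * vecMulVec (v i) (v i)).trace =
      Q.trace + l * (Q * Q).trace - s * (Q * Q).trace := by
    have e : (Q * Q * M).trace = Q.trace := by rw [Matrix.mul_assoc, hQM, Matrix.mul_one]
    rw [← e, ← hPz, ← hPx (Q * Q), Finset.mul_sum, ← Finset.sum_sub_distrib]
    exact Finset.sum_congr rfl fun i _ => by ring
  have hR2 : ∑ i, (z i + s * x i) * (Q * vecMulVec (v i) (v i)).trace =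
      n + l * Q.trace + s * Q.trace := by
    have e : (Q * M).trace = n := by rw [hQM, trace_one, Fintype.card_fin]
    rw [← e, ← hPz, ← hPx Q, Finset.mul_sum, ← Finset.sum_add_distrib]
    exact Finset.sum_congr rfl fun i _ => by ring
  rw [Finset.sum_add_distrib, ← Finset.mul_sum, ← Finset.mul_sum, hL, hR1, hR2] at hsum
  have hT : 0 ≤ Q.trace := hS.inv.posSemidef.trace_nonneg
  have hq := four_trace_le hQt hε
  have hεT : 0 ≤ ε * Q.trace := by positivity
  have hn : (n : ℝ) ≤ n / ε := by
    rw [le_div_iff₀ hε]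
    nlinarith [(Nat.cast_nonneg n : (0 : ℝ) ≤ n)]
  have hbound : 2 * (Q.trace + l * (Q * Q).trace - s * (Q * Q).trace) +
      (n + l * Q.trace + s * Q.trace) ≤ 2 * (n / ε) := by
    rw [hl, hs]
    linarith
  have hKb := mul_le_mul_of_nonneg_left hbound hK
  have hCε : 15 * (K * (n / ε)) ≤ ε * ∑ i, c i * x i := by
    have h := mul_le_mul_of_nonneg_left hC hε.le
    have e : ε * (15 * n * K / ε ^ 2) = 15 * (K * (n / ε)) := by
      field_simp
    linarith
  have hKn : 0 ≤ K * (n / ε) := by positivity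
  rw [hs] at hsum hKb
  linarith
end
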